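/- arXiv:math/0301084 — 4 statements merged into one kernel-verified Lean document; each statement's English description precedes it below -/
import Mathlib

section
/- The subalgebra of F_2[x,y,z,w] consisting of the polynomials invariant under every element of GL_4(F_2) equals the F_2-subalgebra generated by a_8, a_12, a_14, a_15; moreover a_8, a_12, a_14, a_15 are algebraically independent over F_2. -/
noncomputable section

open MvPolynomial

/-- The set of `𝔽₂`-linear combinations (i.e. subset sums) of the family `v`. -/
def spanF2 {R : Type*} [CommRing R] {n : ℕ} (v : Fin n → R) : Finset R :=
  letI := Classical.decEq R
  Finset.image (fun s : Finset (Fin n) => ∑ j ∈ s, v j) Finset.univ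

/-- The Dickson invariant `D_i(v₁, …, vₙ)`: the `(2^n - 2^(n-i))`-th elementary symmetric
polynomial of the `2^n` elements of the `𝔽₂`-linear span of `v₁, …, vₙ`. -/
def dickson {R : Type*} [CommRing R] {n : ℕ} (v : Fin n → R) (i : ℕ) : R :=
  (spanF2 v).val.esymm (2 ^ n - 2 ^ (n - i))

/-- The product `∏_{α ∈ span_{𝔽₂}(v)} (w + α)`. -/
def prodAdd {R : Type*} [CommRing R] {n : ℕ} (v : Fin n → R) (w : R) : R :=
  ∏ α ∈ spanF2 v, (w + α)

/-- The polynomial ring `𝔽₂[x, y, z, w]`. -/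
abbrev R4 := MvPolynomial (Fin 4) (ZMod 2)

def xP : R4 := X 0
def yP : R4 := X 1
def zP : R4 := X 2
def wP : R4 := X 3

def a8 : R4 := dickson ![xP, yP, zP, wP] 1
def a12 : R4 := dickson ![xP, yP, zP, wP] 2
def a14 : R4 := dickson ![xP, yP, zP, wP] 3
def a15 : R4 := dickson ![xP, yP, zP, wP] 4

def b4 : R4 := dickson ![xP, yP, zP] 1
def b6 : R4 := dickson ![xP, yP, zP] 2
def b7 : R4 := dickson ![xP, yP, zP] 3
def b8 : R4 := prodAdd ![xP, yP, zP] wP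

def c2 : R4 := dickson ![xP, yP] 1
def c3 : R4 := dickson ![xP, yP] 2
def c4' : R4 := prodAdd ![xP, yP] zP
def c4'' : R4 := prodAdd ![xP, yP] wP

/-- The action of a matrix `g` on `𝔽₂[x,y,z,w]`, sending the variable `xᵢ` to
`∑ⱼ gᵢⱼ xⱼ`. -/
def matAct (g : Matrix (Fin 4) (Fin 4) (ZMod 2)) : R4 →ₐ[ZMod 2] R4 :=
  aeval (fun i => ∑ j, C (g i j) * X j)


theorem spanVec (s : Finset (Fin 4)) : ∑ j ∈ s, (![xP, yP, zP, wP] : Fin 4 → R4) j = ∑ j ∈ s, X j := by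
  refine Finset.sum_congr rfl fun j _ => ?_
  fin_cases j <;> rfl

def ell (c : Fin 4 → ZMod 2) : R4 := ∑ j, C (c j) * X j

theorem ell_coeff (c : Fin 4 → ZMod 2) (i : Fin 4) : coeff (Finsupp.single i 1) (ell c) = c i := by
  simp [ell, coeff_sum, coeff_C_mul, coeff_X, Finsupp.single_left_inj]

theorem ell_inj : Function.Injective ell := by
  intro c d h
  funext i
  rw [← ell_coeff c, h, ell_coeff]

theorem ell_ind (s : Finset (Fin 4)) : ∑ j ∈ s, (X j : R4) = ell (fun j => if j ∈ s then 1 else 0) := by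
  simp [ell, apply_ite C, ite_mul]

def V4 : Finset R4 := spanF2 ![xP, yP, zP, wP]

theorem mem_V4 (v : R4) : v ∈ V4 ↔ ∃ c, ell c = v := by
  simp only [V4, spanF2, Finset.mem_image, Finset.mem_univ, true_and, spanVec]
  constructor
  · rintro ⟨s, rfl⟩
    exact ⟨_, (ell_ind s).symm⟩
  · rintro ⟨c, rfl⟩
    refine ⟨Finset.univ.filter (fun j => c j = 1), ?_⟩
    rw [ell_ind]
    congr 1
    funext j
    have : ∀ a : ZMod 2, (if a = 1 then (1 : ZMod 2) else 0) = a := by decide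
    simpa using this (c j)

theorem sub_inj : Function.Injective (fun s : Finset (Fin 4) => ∑ j ∈ s, (X j : R4)) := by
  intro s t h
  simp only [ell_ind] at h
  have h2 := ell_inj h
  ext j
  have := congrFun h2 j
  by_cases h1 : j ∈ s <;> by_cases h3 : j ∈ t <;> simp_all

theorem card_V4 : V4.card = 16 := by
  letI := Classical.decEq R4
  simp only [V4, spanF2, spanVec]
  exact (Finset.card_image_of_injective Finset.univ sub_inj).trans (by decide)

def F4 : Polynomial R4 := ∏ α ∈ V4, (Polynomial.X + Polynomial.C α)

theorem dickson_eq (i : ℕ) : dickson ![xP, yP, zP, wP] i = F4.coeff (2 ^ (4 - i)) := by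
  have h : 2 ^ (4 - i) ≤ 16 := (Nat.pow_le_pow_right (by norm_num) (Nat.sub_le 4 i)).trans (by norm_num)
  have := Multiset.prod_X_add_C_coeff V4.val (k := 2 ^ (4 - i)) (by simpa [card_V4] using h)
  simp only [Finset.card_val, card_V4] at this
  exact this.symm

theorem lin_step {A : Type*} [CommRing A] [CharP A 2] (p q r t u : A) :
    ((t + u) ^ 8 + p * (t + u) ^ 4 + q * (t + u) ^ 2 + r * (t + u)) =
     (t ^ 8 + p * t ^ 4 + q * t ^ 2 + r * t) + (u ^ 8 + p * u ^ 4 + q * u ^ 2 + r * u) := by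
  have h2 : (t + u) ^ 2 = t ^ 2 + u ^ 2 := CharTwo.add_sq t u
  have h4 : (t + u) ^ 4 = t ^ 4 + u ^ 4 := by
    rw [show (t + u) ^ 4 = ((t + u) ^ 2) ^ 2 by ring, h2, CharTwo.add_sq]; ring
  have h8 : (t + u) ^ 8 = t ^ 8 + u ^ 8 := by
    rw [show (t + u) ^ 8 = ((t + u) ^ 4) ^ 2 by ring, h4, CharTwo.add_sq]; ring
  rw [h2, h4, h8]; ring

theorem prod_form {A : Type*} [CommRing A] [CharP A 2] (x y z w : A) :
    ∃ p q r s : A, ∀ {B : Type _} [CommRing B] [CharP B 2] (f : A →+* B) (t : B), 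
     t * (t + f x) * ((t + f y) * (t + f y + f x)) * ((t + f z) * (t + f z + f x) * ((t + f z + f y) * (t + f z + f y + f x))) *
     ((t + f w) * (t + f w + f x) * ((t + f w + f y) * (t + f w + f y + f x)) * ((t + f w + f z) * (t + f w + f z + f x) * ((t + f w + f z + f y) * (t + f w + f z + f y + f x))))
     = t ^ 16 + f p * t ^ 8 + f q * t ^ 4 + f r * t ^ 2 + f s * t := by
  -- level polynomials
  let a := y ^ 2 + x * y
  let p2 := x ^ 2 + a
  let q2 := a * x
  let b := z ^ 4 + p2 * z ^ 2 + q2 * z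
  let p3 := p2 ^ 2 + b
  let q3 := q2 ^ 2 + b * p2
  let r3 := b * q2
  let c := w ^ 8 + p3 * w ^ 4 + q3 * w ^ 2 + r3 * w
  refine ⟨p3 ^ 2 + c, q3 ^ 2 + c * p3, r3 ^ 2 + c * q3, c * r3, ?_⟩
  intro B _ _ f t
  have two : (2 : B) = 0 := CharTwo.two_eq_zero
  have e2 : ∀ t : B, t * (t + f x) * ((t + f y) * (t + f y + f x)) = t ^ 4 + f p2 * t ^ 2 + f q2 * t := by
    intro t
    simp only [p2, q2, a, map_add, map_mul, map_pow]
    linear_combination (t^3 * (f x + f y) + t^2 * f x * f y) * two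
  have e3 : ∀ t : B, t * (t + f x) * ((t + f y) * (t + f y + f x)) * ((t + f z) * (t + f z + f x) * ((t + f z + f y) * (t + f z + f y + f x))) = t ^ 8 + f p3 * t ^ 4 + f q3 * t ^ 2 + f r3 * t := by
    intro t
    have l := lin_step 1 (f p2 - 0) (f q2) t (f z)
    have l2 : (t + f z) ^ 2 = t ^ 2 + f z ^ 2 := CharTwo.add_sq t (f z)
    have l4 : (t + f z) ^ 4 = t ^ 4 + f z ^ 4 := by
      rw [show (t + f z) ^ 4 = ((t + f z) ^ 2) ^ 2 by ring, l2, CharTwo.add_sq]; ring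
    rw [e2, e2, l2, l4]
    have hb : f b = f z ^ 4 + f p2 * f z ^ 2 + f q2 * f z := by simp [b]
    have s1 := CharTwo.add_sq (t ^ 4 + f p2 * t ^ 2) (f q2 * t)
    have s2 := CharTwo.add_sq (t ^ 4) (f p2 * t ^ 2)
    have h3 : f p3 = f p2 ^ 2 + f b := by simp [p3]
    have h4 : f q3 = f q2 ^ 2 + f b * f p2 := by simp [q3]
    have h5 : f r3 = f b * f q2 := by simp [r3]
    rw [h3, h4, h5, hb]
    linear_combination s1 + s2
  rw [e3, e3, lin_step]
  have hc : f c = f w ^ 8 + f p3 * f w ^ 4 + f q3 * f w ^ 2 + f r3 * f w := by simp [c]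
  have s1 := CharTwo.add_sq (t ^ 8 + f p3 * t ^ 4 + f q3 * t ^ 2) (f r3 * t)
  have s2 := CharTwo.add_sq (t ^ 8 + f p3 * t ^ 4) (f q3 * t ^ 2)
  have s3 := CharTwo.add_sq (t ^ 8) (f p3 * t ^ 4)
  simp only [map_add, map_mul, map_pow] at *
  linear_combination s1 + s2 + s3 + (t ^ 8 + f p3 * t ^ 4 + f q3 * t ^ 2 + f r3 * t) * (-hc)

theorem F4_form : F4 = Polynomial.X ^ 16 + Polynomial.C a8 * Polynomial.X ^ 8 + Polynomial.C a12 * Polynomial.X ^ 4 + Polynomial.C a14 * Polynomial.X ^ 2 + Polynomial.C a15 * Polynomial.X := by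
  have key : ∃ p q r s : R4, F4 = Polynomial.X ^ 16 + Polynomial.C p * Polynomial.X ^ 8 + Polynomial.C q * Polynomial.X ^ 4 + Polynomial.C r * Polynomial.X ^ 2 + Polynomial.C s * Polynomial.X := by
    obtain ⟨p, q, r, s, h⟩ := prod_form (MvPolynomial.X 0 : R4) (MvPolynomial.X 1) (MvPolynomial.X 2) (MvPolynomial.X 3)
    refine ⟨p, q, r, s, ?_⟩
    rw [← h Polynomial.C Polynomial.X]
    letI := Classical.decEq R4
    simp only [F4, V4, spanF2, spanVec]
    refine (Finset.prod_image sub_inj.injOn).trans ?_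
    rw [show (Finset.univ : Finset (Finset (Fin 4))) = Finset.powerset {0, 1, 2, 3} by decide]
    have n0 : (0 : Fin 4) ∉ ({1, 2, 3} : Finset (Fin 4)) := by decide
    have n1 : (1 : Fin 4) ∉ ({2, 3} : Finset (Fin 4)) := by decide
    have n2 : (2 : Fin 4) ∉ ({3} : Finset (Fin 4)) := by decide
    have n3 : (3 : Fin 4) ∉ (∅ : Finset (Fin 4)) := by decide
    rw [Finset.prod_powerset_insert n0, Finset.prod_powerset_insert n1,
      Finset.prod_powerset_insert n1, ← insert_empty_eq (3 : Fin 4)]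
    simp only [Finset.prod_powerset_insert n3, Finset.prod_powerset_insert
      (show (2 : Fin 4) ∉ (insert 3 ∅ : Finset (Fin 4)) by decide), Finset.powerset_empty,
      Finset.prod_singleton]
    simp [Finset.sum_insert]
    ac_rfl
  obtain ⟨p, q, r, s, h⟩ := key
  have h8 : a8 = p := by
    rw [a8, dickson_eq, h]; simp [Polynomial.coeff_X, Polynomial.coeff_X_pow]
  have h12 : a12 = q := by
    rw [a12, dickson_eq, h]; simp [Polynomial.coeff_X, Polynomial.coeff_X_pow]
  have h14 : a14 = r := by
    rw [a14, dickson_eq, h]; simp [Polynomial.coeff_X, Polynomial.coeff_X_pow]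
  have h15 : a15 = s := by
    rw [a15, dickson_eq, h]; simp [Polynomial.coeff_X, Polynomial.coeff_X_pow]
  rw [h8, h12, h14, h15, h]

theorem matAct_ell (g : Matrix (Fin 4) (Fin 4) (ZMod 2)) (c : Fin 4 → ZMod 2) :
    matAct g (ell c) = ell (Matrix.vecMul c g) := by
  simp only [ell, matAct, map_sum, map_mul, aeval_X, Matrix.vecMul, dotProduct, Finset.mul_sum,
    Finset.sum_mul, algHom_C, algebraMap_eq]
  rw [Finset.sum_comm]
  simp [mul_assoc]

theorem matAct_image (g : GL (Fin 4) (ZMod 2)) : 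
    ∏ α ∈ V4, (Polynomial.X + Polynomial.C (matAct (g : Matrix (Fin 4) (Fin 4) (ZMod 2)) α)) = F4 := by
  have hi : Set.InjOn (matAct (g : Matrix (Fin 4) (Fin 4) (ZMod 2))) (V4 : Set R4) := by
    intro u hu v hv h
    obtain ⟨c, rfl⟩ := (mem_V4 u).1 hu
    obtain ⟨d, rfl⟩ := (mem_V4 v).1 hv
    rw [matAct_ell, matAct_ell] at h
    have h' := congrArg (fun v => Matrix.vecMul v ((g⁻¹ : GL (Fin 4) (ZMod 2)) : Matrix (Fin 4) (Fin 4) (ZMod 2))) (ell_inj h)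
    simp only [Matrix.vecMul_vecMul, ← Units.val_mul, mul_inv_cancel, Units.val_one, Matrix.vecMul_one] at h'
    rw [h']
  classical
  have him : V4.image (matAct (g : Matrix (Fin 4) (Fin 4) (ZMod 2))) = V4 := by
    apply Finset.eq_of_subset_of_card_le
    · intro v hv
      obtain ⟨u, hu, rfl⟩ := Finset.mem_image.1 hv
      obtain ⟨c, rfl⟩ := (mem_V4 u).1 hu
      rw [matAct_ell]
      exact (mem_V4 _).2 ⟨_, rfl⟩
    · rw [Finset.card_image_of_injOn hi]
  conv_rhs => rw [F4, ← him, Finset.prod_image hi]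

theorem matAct_coeff (g : GL (Fin 4) (ZMod 2)) (n : ℕ) :
    matAct (g : Matrix (Fin 4) (Fin 4) (ZMod 2)) (F4.coeff n) = F4.coeff n := by
  have : F4.map (matAct (g : Matrix (Fin 4) (Fin 4) (ZMod 2)) : R4 →+* R4) = F4 := by
    conv_rhs => rw [← matAct_image g]
    simp [F4, Polynomial.map_prod]
  conv_rhs => rw [← this]
  simp

theorem easy_dir (p : R4) (hp : p ∈ Algebra.adjoin (ZMod 2) ({a8, a12, a14, a15} : Set R4))
    (g : GL (Fin 4) (ZMod 2)) : matAct (g : Matrix (Fin 4) (Fin 4) (ZMod 2)) p = p := by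
  have : Algebra.adjoin (ZMod 2) ({a8, a12, a14, a15} : Set R4) ≤
      AlgHom.equalizer (matAct (g : Matrix (Fin 4) (Fin 4) (ZMod 2))) (AlgHom.id _ _) := by
    rw [Algebra.adjoin_le_iff]
    rintro v (rfl | rfl | rfl | rfl) <;>
    simp only [SetLike.mem_coe, AlgHom.mem_equalizer, AlgHom.id_apply, a8, a12, a14, a15, dickson_eq, matAct_coeff]
  exact this hp

abbrev D4 : Subalgebra (ZMod 2) R4 := Algebra.adjoin (ZMod 2) ({a8, a12, a14, a15} : Set R4)

theorem range_eq : Set.range ![a8, a12, a14, a15] = ({a8, a12, a14, a15} : Set R4) := by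
  simp only [Matrix.range_cons, Matrix.range_empty, Set.union_empty, Set.singleton_union]

def b8' : D4 := ⟨a8, Algebra.subset_adjoin (by simp)⟩
def b12' : D4 := ⟨a12, Algebra.subset_adjoin (by simp)⟩
def b14' : D4 := ⟨a14, Algebra.subset_adjoin (by simp)⟩
def b15' : D4 := ⟨a15, Algebra.subset_adjoin (by simp)⟩

def FD : Polynomial D4 := Polynomial.X ^ 16 + (Polynomial.C b8' * Polynomial.X ^ 8 +
  Polynomial.C b12' * Polynomial.X ^ 4 + Polynomial.C b14' * Polynomial.X ^ 2 + Polynomial.C b15' * Polynomial.X)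

theorem FD_map : FD.map (algebraMap D4 R4) = F4 := by
  rw [F4_form]
  have h8 : algebraMap D4 R4 b8' = a8 := rfl
  have h12 : algebraMap D4 R4 b12' = a12 := rfl
  have h14 : algebraMap D4 R4 b14' = a14 := rfl
  have h15 : algebraMap D4 R4 b15' = a15 := rfl
  simp only [FD, Polynomial.map_add, Polynomial.map_mul, Polynomial.map_pow, Polynomial.map_X, Polynomial.map_C,
    h8, h12, h14, h15]
  ring

theorem FD_monic : FD.Monic := by
  unfold FD
  apply Polynomial.monic_X_pow_add
  compute_degree!

theorem F4_root (v : R4) (hv : v ∈ V4) : F4.eval v = 0 := by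
  rw [F4, Polynomial.eval_prod]
  exact Finset.prod_eq_zero hv (by simp [CharTwo.add_self_eq_zero])

theorem X_mem (i : Fin 4) : (X i : R4) ∈ V4 :=
  (mem_V4 _).2 ⟨Pi.single i 1, by simp [ell, Pi.single_apply, apply_ite C, ite_mul]⟩

instance D4_int : Algebra.IsIntegral D4 R4 := by
  constructor
  intro p
  have hX : ∀ i, IsIntegral D4 (X i : R4) := fun i =>
    ⟨FD, FD_monic, by rw [← Polynomial.eval_map, FD_map]; exact F4_root _ (X_mem i)⟩
  induction p using MvPolynomial.induction_on with
  | C a =>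
    exact isIntegral_algebraMap (R := D4) (x := algebraMap (ZMod 2) D4 a)
  | add p q hp hq => exact hp.add hq
  | mul_X p i hp => exact hp.mul (hX i)

theorem alg_indep : AlgebraicIndependent (ZMod 2) ![a8, a12, a14, a15] := by
  have h : Algebra.IsAlgebraic (Algebra.adjoin (ZMod 2) (Set.range ![a8, a12, a14, a15])) R4 := by
    rw [range_eq]
    exact Algebra.IsIntegral.isAlgebraic
  exact (Algebra.IsAlgebraic.isTranscendenceBasis_of_le_trdeg_of_finite (ZMod 2) ![a8, a12, a14, a15]
    (by rw [MvPolynomial.trdeg_of_isDomain]; simp)).1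

instance D4_ic : IsIntegrallyClosed D4 := by
  have e := alg_indep.aevalEquiv
  rw [range_eq] at e
  exact IsIntegrallyClosed.of_equiv e.toRingEquiv

theorem hard_dir_aux (D K4 L4 : Type) [CommRing D] [IsDomain D] [IsIntegrallyClosed D] [Algebra D R4]
    [Algebra.IsIntegral D R4] (FD' : Polynomial D) (hFD : FD'.map (algebraMap D R4) = F4)
    [Field K4] [Field L4] [Algebra D K4] [IsFractionRing D K4]
    [Algebra R4 L4] [IsFractionRing R4 L4] [Algebra K4 L4] [Algebra D L4] [IsScalarTower D K4 L4]
    [IsScalarTower D R4 L4] (p : R4)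
    (hp : ∀ g : GL (Fin 4) (ZMod 2), matAct (g : Matrix (Fin 4) (Fin 4) (ZMod 2)) p = p) :
    ∃ d : D, algebraMap D R4 d = p := by
  have hinj : Function.Injective (algebraMap R4 L4) := IsFractionRing.injective R4 L4
  let F : Polynomial K4 := FD'.map (algebraMap D K4)
  have two : (2 : L4) = 0 := by
    have : (2 : R4) = 0 := CharTwo.two_eq_zero
    rw [← map_ofNat (algebraMap R4 L4) 2, this, map_zero]
  have neg : ∀ t : L4, -t = t := fun t => by linear_combination (-t) * two
  have hF : F.map (algebraMap K4 L4) = ∏ α ∈ V4, (Polynomial.X - Polynomial.C (algebraMap R4 L4 α)) := by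
    simp only [F]
    rw [Polynomial.map_map, ← IsScalarTower.algebraMap_eq, IsScalarTower.algebraMap_eq D R4 L4,
      ← Polynomial.map_map, hFD, F4, Polynomial.map_prod]
    refine Finset.prod_congr rfl fun α _ => ?_
    rw [sub_eq_add_neg, ← Polynomial.C_neg, neg]
    simp
  have hroot : ∀ t : L4, Polynomial.aeval t F = 0 ↔ ∃ α ∈ V4, t = algebraMap R4 L4 α := by
    intro t
    rw [Polynomial.aeval_def, ← Polynomial.eval_map, hF, Polynomial.eval_prod, Finset.prod_eq_zero_iff]
    simp [sub_eq_zero]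
  have hsep : F.Separable := by
    rw [← Polynomial.separable_map (algebraMap K4 L4), hF]
    exact Polynomial.separable_prod_X_sub_C_iff'.2 fun x _ y _ h => hinj h
  have hF0 : F ≠ 0 := hsep.ne_zero
  have : F.IsSplittingField K4 L4 := by
    rw [isSplittingField_iff_intermediateField]
    refine ⟨?_, ?_⟩
    · rw [hF]
      exact Polynomial.Splits.prod fun α _ => Polynomial.Splits.X_sub_C _
    · rw [eq_top_iff]
      have hR : ∀ q : R4, algebraMap R4 L4 q ∈ IntermediateField.adjoin K4 (F.rootSet L4) := by
        intro q
        induction q using MvPolynomial.induction_on with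
        | C a =>
          have : algebraMap R4 L4 (C a) = algebraMap K4 L4 (a.val : K4) := by
            rw [map_natCast, ← map_natCast (algebraMap R4 L4), ← map_natCast C, ZMod.natCast_zmod_val]
          rw [this]
          exact IntermediateField.algebraMap_mem _ _
        | add p q hp hq => rw [map_add]; exact add_mem hp hq
        | mul_X p i hp =>
          rw [map_mul]
          refine mul_mem hp (IntermediateField.subset_adjoin _ _ ?_)
          rw [Polynomial.mem_rootSet]
          exact ⟨hF0, (hroot _).2 ⟨_, X_mem i, rfl⟩⟩
      intro t _
      obtain ⟨a, b, _, rfl⟩ := IsFractionRing.div_surjective (A := R4) t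
      exact div_mem (hR a) (hR b)
  have : IsGalois K4 L4 := IsGalois.of_separable_splitting_field hsep
  have : FiniteDimensional K4 L4 := Polynomial.IsSplittingField.finiteDimensional L4 F
  have hfix : ∀ σ : Gal(L4/K4), σ (algebraMap R4 L4 p) = algebraMap R4 L4 p := by
    intro σ
    have h1 : ∀ i : Fin 4, ∃ c, σ (algebraMap R4 L4 (X i)) = algebraMap R4 L4 (ell c) := by
      intro i
      have h0 : Polynomial.aeval (σ (algebraMap R4 L4 (X i))) F = 0 := by
        rw [Polynomial.aeval_algHom_apply, (hroot _).2 ⟨_, X_mem i, rfl⟩, map_zero]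
      obtain ⟨α, hα, h⟩ := (hroot _).1 h0
      obtain ⟨c, rfl⟩ := (mem_V4 α).1 hα
      exact ⟨c, h⟩
    choose c hc using h1
    let g : Matrix (Fin 4) (Fin 4) (ZMod 2) := Matrix.of c
    have hact : ∀ q : R4, σ (algebraMap R4 L4 q) = algebraMap R4 L4 (matAct g q) := by
      intro q
      induction q using MvPolynomial.induction_on with
      | C a =>
        have : algebraMap R4 L4 (C a) = algebraMap K4 L4 (a.val : K4) := by
          rw [map_natCast, ← map_natCast (algebraMap R4 L4), ← map_natCast C, ZMod.natCast_zmod_val]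
        rw [algHom_C, algebraMap_eq, this, AlgEquiv.commutes]
      | add p q hp hq => simp only [map_add, hp, hq]
      | mul_X p i hp =>
        rw [map_mul, map_mul, hp, hc, map_mul, map_mul]
        congr 2
        simp [matAct, g, ell]
    have hg : IsUnit g := by
      rw [← Matrix.vecMul_injective_iff_isUnit]
      intro u v huv
      apply ell_inj
      apply hinj
      apply σ.injective
      rw [hact, hact, matAct_ell, matAct_ell]
      simp only at huv
      rw [huv]
    obtain ⟨G, hG⟩ := hg
    rw [hact, ← hG, hp G]
  obtain ⟨k, hk⟩ := (IsGalois.mem_range_algebraMap_iff_fixed (F := K4) (E := L4) _).2 hfix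
  have hint : IsIntegral D k := by
    have h1 : IsIntegral D (algebraMap R4 L4 p) := (Algebra.IsIntegral.isIntegral (R := D) p).algebraMap
    rw [← hk] at h1
    exact (isIntegral_algebraMap_iff (algebraMap K4 L4).injective).1 h1
  obtain ⟨d, hd⟩ := IsIntegrallyClosed.algebraMap_eq_of_integral hint
  have : algebraMap R4 L4 (algebraMap D R4 d) = algebraMap R4 L4 p := by
    rw [← hk, ← hd, ← IsScalarTower.algebraMap_apply D K4 L4, IsScalarTower.algebraMap_apply D R4 L4]
  exact ⟨d, hinj this⟩


theorem hard_dir_aux2 (D : Type) [CommRing D] [IsDomain D] [IsIntegrallyClosed D] [Algebra D R4]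
    [Algebra.IsIntegral D R4] (FD' : Polynomial D) (hFD : FD'.map (algebraMap D R4) = F4)
    (hD : Function.Injective (algebraMap D R4)) (p : R4)
    (hp : ∀ g : GL (Fin 4) (ZMod 2), matAct (g : Matrix (Fin 4) (Fin 4) (ZMod 2)) p = p) :
    ∃ d : D, algebraMap D R4 d = p := by
  have hinj : Function.Injective (algebraMap R4 (FractionRing R4)) := IsFractionRing.injective R4 _
  have hj : Function.Injective (algebraMap D (FractionRing R4)) := by
    rw [IsScalarTower.algebraMap_eq D R4 (FractionRing R4)]
    exact hinj.comp hD
  let i2 : Algebra (FractionRing D) (FractionRing R4) := (IsFractionRing.lift hj).toAlgebra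
  have i3 : IsScalarTower D (FractionRing D) (FractionRing R4) :=
    IsScalarTower.of_algebraMap_eq (fun x => (IsFractionRing.lift_algebraMap hj x).symm)
  exact hard_dir_aux D (FractionRing D) (FractionRing R4) FD' hFD p hp

theorem hard_dir (p : R4)
    (hp : ∀ g : GL (Fin 4) (ZMod 2), matAct (g : Matrix (Fin 4) (Fin 4) (ZMod 2)) p = p) :
    p ∈ D4 := by
  obtain ⟨d, rfl⟩ := hard_dir_aux2 D4 FD FD_map Subtype.val_injective p hp
  exact d.2

theorem stmt_7 :
    (∀ p : R4,
        (∀ g : GL (Fin 4) (ZMod 2), matAct (g : Matrix (Fin 4) (Fin 4) (ZMod 2)) p = p) ↔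
          p ∈ Algebra.adjoin (ZMod 2) {a8, a12, a14, a15}) ∧
    AlgebraicIndependent (ZMod 2) ![a8, a12, a14, a15] := by
  exact ⟨fun p => ⟨hard_dir p, easy_dir p⟩, alg_indep⟩
end
end

section
/- The subalgebra of F_2[x,y,z,w] consisting of the polynomials invariant under every element of GL^3_1(F_2) equals the F_2-subalgebra generated by b_4, b_6, b_7, b_8; moreover b_4, b_6, b_7, b_8 are algebraically independent over F_2. -/
noncomputable section

open MvPolynomial

/-- Membership in the subgroup `GL³₁(𝔽₂) ≤ GL₄(𝔽₂)` of matrices `g` with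
`g₁₄ = g₂₄ = g₃₄ = 0` (in one-based indexing). -/
def memGL31 (g : GL (Fin 4) (ZMod 2)) : Prop :=
  (g : Matrix (Fin 4) (Fin 4) (ZMod 2)) 0 3 = 0 ∧
  (g : Matrix (Fin 4) (Fin 4) (ZMod 2)) 1 3 = 0 ∧
  (g : Matrix (Fin 4) (Fin 4) (ZMod 2)) 2 3 = 0


/-- A homogeneous component of a product with a homogeneous factor. -/
lemma comp_hom_mul {σ : Type*} {R : Type*} [CommRing R] {D : MvPolynomial σ R} {e : ℕ}
    (hD : D.IsHomogeneous e) (r : MvPolynomial σ R) (d : ℕ) :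
    homogeneousComponent d (D * r) =
      if e ≤ d then D * homogeneousComponent (d - e) r else 0 := by
  have key : ∀ j, homogeneousComponent d (D * homogeneousComponent j r) =
      if e + j = d then D * homogeneousComponent j r else 0 := by
    intro j
    rw [homogeneousComponent_of_mem (m := d) (n := e + j)
      (hD.mul (homogeneousComponent_isHomogeneous j r))]
    simp [eq_comm]
  conv_lhs => rw [← sum_homogeneousComponent r, Finset.mul_sum, map_sum]
  simp_rw [key]
  split_ifs with h
  · have h2 : ∀ j, (e + j = d) ↔ (d - e = j) := by intro j; omega
    simp_rw [h2]
    rw [Finset.sum_ite_eq]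
    split_ifs with h3
    · rfl
    · rw [homogeneousComponent_eq_zero, mul_zero]
      rw [Finset.mem_range] at h3
      omega
  · apply Finset.sum_eq_zero
    intro j _
    rw [if_neg (by omega)]

/-- An algebra generated by homogeneous elements is closed under homogeneous components. -/
lemma adjoin_comp_mem {σ : Type*} {R : Type*} [CommRing R] {S : Set (MvPolynomial σ R)}
    (hS : ∀ s ∈ S, ∃ d, s.IsHomogeneous d) {p : MvPolynomial σ R}
    (hp : p ∈ Algebra.adjoin R S) (d : ℕ) :
    homogeneousComponent d p ∈ Algebra.adjoin R S := by
  have hom : ∀ {q : MvPolynomial σ R} {e : ℕ}, q.IsHomogeneous e → q ∈ Algebra.adjoin R S →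
      ∀ d, homogeneousComponent d q ∈ Algebra.adjoin R S := by
    intro q e hq hm d
    rw [homogeneousComponent_of_mem (m := d) (n := e) hq]
    split_ifs
    · exact hm
    · exact zero_mem _
  induction hp using Algebra.adjoin_induction generalizing d with
  | mem x hx =>
    obtain ⟨e, he⟩ := hS x hx
    exact hom he (Algebra.subset_adjoin hx) d
  | algebraMap r =>
    exact hom (isHomogeneous_C σ r) (Subalgebra.algebraMap_mem _ r) d
  | add x y _ _ hx hy =>
    rw [map_add]
    exact add_mem (hx d) (hy d)
  | mul x y _ _ hx hy =>
    rw [← sum_homogeneousComponent x, Finset.sum_mul, map_sum]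
    refine sum_mem fun i _ => ?_
    rw [comp_hom_mul (homogeneousComponent_isHomogeneous i x)]
    split_ifs
    · exact mul_mem (hx _) (hy _)
    · exact zero_mem _

/-- Graded algebra endomorphisms commute with homogeneous components. -/
lemma comp_map {σ τ : Type*} {R : Type*} [CommRing R] (φ : MvPolynomial σ R →ₐ[R] MvPolynomial τ R)
    (hφ : ∀ i, (φ (X i)).IsHomogeneous 1) (p : MvPolynomial σ R) (d : ℕ) :
    homogeneousComponent d (φ p) = φ (homogeneousComponent d p) := by
  have h1 : ∀ j, (φ (homogeneousComponent j p)).IsHomogeneous j := by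
    intro j
    have := (homogeneousComponent_isHomogeneous j p).aeval (φ ∘ X) hφ
    rw [← MvPolynomial.aeval_unique φ] at this
    simpa using this
  conv_lhs => rw [← sum_homogeneousComponent p, map_sum, map_sum]
  have key : ∀ j, homogeneousComponent d (φ (homogeneousComponent j p)) =
      if d = j then φ (homogeneousComponent j p) else 0 := by
    intro j
    rw [homogeneousComponent_of_mem (m := d) (n := j) (h1 j)]
  simp_rw [key]
  rw [Finset.sum_ite_eq]
  split_ifs with h3
  · rfl
  · rw [homogeneousComponent_eq_zero, map_zero]
    simpa using h3

/-- The inductive step: if every invariant agrees modulo `D` with an element of the algebra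
generated by the homogeneous invariants in `S` (one of which is `D`), then every invariant lies
in that algebra. -/
lemma main_step {σ : Type*} {R : Type*} [CommRing R] [IsDomain R]
    (Φ : Set (MvPolynomial σ R →ₐ[R] MvPolynomial σ R))
    (hΦ : ∀ φ ∈ Φ, ∀ i, (φ (X i)).IsHomogeneous 1)
    (S : Set (MvPolynomial σ R)) (hS : ∀ s ∈ S, ∃ d, s.IsHomogeneous d)
    (hSinv : ∀ s ∈ S, ∀ φ ∈ Φ, φ s = s)
    (D : MvPolynomial σ R) (hDS : D ∈ S) (hD0 : D ≠ 0) (e : ℕ) (he : 0 < e)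
    (hD : D.IsHomogeneous e)
    (h : ∀ p, (∀ φ ∈ Φ, φ p = p) → ∃ q ∈ Algebra.adjoin R S, D ∣ p - q)
    (p : MvPolynomial σ R) (hp : ∀ φ ∈ Φ, φ p = p) : p ∈ Algebra.adjoin R S := by
  have hadj : ∀ q ∈ Algebra.adjoin R S, ∀ φ ∈ Φ, φ q = q := by
    intro q hq φ hφ
    have : Algebra.adjoin R S ≤ AlgHom.equalizer φ (AlgHom.id R _) :=
      Algebra.adjoin_le fun s hs => hSinv s hs φ hφ
    exact this hq
  have hom : ∀ d : ℕ, ∀ p : MvPolynomial σ R, p.IsHomogeneous d → (∀ φ ∈ Φ, φ p = p) →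
      p ∈ Algebra.adjoin R S := by
    intro d
    induction d using Nat.strong_induction_on with
    | _ d ih =>
    intro p hpd hp
    obtain ⟨q, hq, r, hr⟩ := h p hp
    have h1 : p - homogeneousComponent d q = homogeneousComponent d (D * r) := by
      rw [← hr, map_sub, homogeneousComponent_eq_self hpd]
    rw [comp_hom_mul hD] at h1
    have hqd := adjoin_comp_mem hS hq d
    rw [← sub_add_cancel p (homogeneousComponent d q), h1]
    refine add_mem ?_ hqd
    split_ifs at h1 ⊢ with hed
    · refine mul_mem (Algebra.subset_adjoin hDS) (ih (d - e) (by omega) _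
        (homogeneousComponent_isHomogeneous _ _) ?_)
      intro φ hφ
      have h2 := congrArg φ h1
      rw [map_sub, hp φ hφ, hadj _ hqd φ hφ, map_mul, hSinv D hDS φ hφ, h1] at h2
      exact (mul_left_cancel₀ hD0 h2).symm
    · exact zero_mem _
  rw [← sum_homogeneousComponent p]
  refine sum_mem fun i _ => hom i _ (homogeneousComponent_isHomogeneous _ _) fun φ hφ => ?_
  rw [← comp_map φ (hΦ φ hφ), hp φ hφ]

/-- Over `𝔽₂` a polynomial with vanishing partial derivatives is a square. -/
lemma exists_sq {σ : Type*} (a : MvPolynomial σ (ZMod 2)) (ha : ∀ i, pderiv i a = 0) :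
    ∃ h, a = h ^ 2 := by
  have heven : ∀ m ∈ a.support, ∀ i, Even (m i) := by
    intro m hm i
    by_contra hodd
    rw [Nat.not_even_iff_odd] at hodd
    obtain ⟨k, hk⟩ := hodd
    have h1 := congrArg (coeff (m - Finsupp.single i 1)) (ha i)
    rw [coeff_pderiv, coeff_zero, tsub_add_cancel_of_le] at h1
    · rw [Finsupp.tsub_apply, hk] at h1
      simp only [Finsupp.single_eq_same] at h1
      have h2 : (((2 * k + 1 - 1 : ℕ) : ZMod 2) + 1) = 1 := by
        simp only [Nat.add_sub_cancel, Nat.cast_mul]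
        have : ((2 : ℕ) : ZMod 2) = 0 := rfl
        rw [this]; simp
      rw [h2, mul_one] at h1
      exact (mem_support_iff.mp hm) h1
    · rw [Finsupp.single_le_iff]; omega
  refine ⟨∑ m ∈ a.support, monomial (m.mapRange (· / 2) rfl) (coeff m a), ?_⟩
  rw [← expand_zmod, map_sum]
  conv_lhs => rw [← support_sum_monomial_coeff a]
  refine Finset.sum_congr rfl fun m hm => ?_
  rw [expand_monomial]
  have hm2 : 2 • m.mapRange (· / 2) rfl = m := by
    ext i
    simp only [Finsupp.smul_apply, Finsupp.mapRange_apply, smul_eq_mul]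
    rw [Nat.mul_div_cancel' (heven m hm i).two_dvd]
  rw [hm2]

/-- The linear form with coefficient vector `v`. -/
def lf {n : ℕ} (v : Fin n → ZMod 2) : MvPolynomial (Fin n) (ZMod 2) := ∑ i, C (v i) * X i

lemma lf_add {n : ℕ} (v w : Fin n → ZMod 2) : lf (v + w) = lf v + lf w := by
  simp [lf, add_mul, Finset.sum_add_distrib]

lemma lf_zero {n : ℕ} : lf (0 : Fin n → ZMod 2) = 0 := by simp [lf]

lemma lf_single {n : ℕ} (j : Fin n) (c : ZMod 2) : lf (Pi.single j c) = C c * X j := by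
  rw [lf, Finset.sum_eq_single j]
  · simp
  · intro b _ hb
    simp [hb]
  · simp

lemma coeff_lf {n : ℕ} (v : Fin n → ZMod 2) (i : Fin n) :
    coeff (Finsupp.single i 1) (lf v) = v i := by
  rw [lf, coeff_sum, Finset.sum_eq_single i]
  · simp [coeff_C_mul]
  · intro b _ hb
    rw [coeff_C_mul, coeff_X, if_neg, mul_zero]
    intro h
    exact hb (Finsupp.single_left_injective one_ne_zero h)
  · simp

lemma lf_inj {n : ℕ} : Function.Injective (lf (n := n)) := by
  intro v w h
  funext i
  rw [← coeff_lf v, h, coeff_lf]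

lemma lf_hom {n : ℕ} (v : Fin n → ZMod 2) : (lf v).IsHomogeneous 1 :=
  IsHomogeneous.sum _ _ _ fun _ _ => isHomogeneous_C_mul_X _ _

/-- The polynomial `∏ (T + α)` over all linear forms `α`. -/
def FP (n : ℕ) : Polynomial (MvPolynomial (Fin n) (ZMod 2)) :=
  ∏ v : Fin n → ZMod 2, (Polynomial.X + Polynomial.C (lf v))

/-- The product of the nonzero linear forms. -/
def DP (n : ℕ) : MvPolynomial (Fin n) (ZMod 2) :=
  ∏ v ∈ Finset.univ.erase (0 : Fin n → ZMod 2), lf v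

lemma FP_coeff_one (n : ℕ) : (FP n).coeff 1 = DP n := by
  rw [FP, ← Finset.mul_prod_erase _ _ (Finset.mem_univ (0 : Fin n → ZMod 2)), lf_zero]
  rw [map_zero, add_zero, Polynomial.coeff_X_mul, Polynomial.coeff_zero_eq_eval_zero,
    Polynomial.eval_prod, DP]
  simp

lemma DP_ne_zero (n : ℕ) : DP n ≠ 0 := by
  rw [DP, Finset.prod_ne_zero_iff]
  intro v hv h
  rw [← lf_zero] at h
  exact (Finset.mem_erase.mp hv).1 (lf_inj h)

lemma FP_coeff_hom (n k : ℕ) : ∃ d, ((FP n).coeff k).IsHomogeneous d := by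
  by_cases hk : k ≤ (Finset.univ : Finset (Fin n → ZMod 2)).card
  · rw [FP, Finset.prod_X_add_C_coeff _ _ hk]
    refine ⟨((Finset.univ : Finset (Fin n → ZMod 2)).card - k) * 1,
      IsHomogeneous.sum _ _ _ fun t ht => ?_⟩
    have := IsHomogeneous.prod t lf (fun _ => 1) fun i _ => lf_hom i
    rw [Finset.sum_const, smul_eq_mul, (Finset.mem_powersetCard.mp ht).2] at this
    exact this
  · refine ⟨0, ?_⟩
    rw [Polynomial.coeff_eq_zero_of_natDegree_lt]
    · exact isHomogeneous_zero _ _ _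
    · refine lt_of_le_of_lt ?_ (not_le.mp hk)
      rw [FP]
      refine (Polynomial.natDegree_prod_le _ _).trans ?_
      simp

lemma DP_hom (n : ℕ) : (DP n).IsHomogeneous (2 ^ n - 1) := by
  have := IsHomogeneous.prod (Finset.univ.erase (0 : Fin n → ZMod 2)) lf (fun _ => 1)
    fun i _ => lf_hom i
  rw [DP]
  simpa [Finset.card_erase_of_mem, ZMod.card] using this

/-- The transvection `X_i ↦ X_i + X_j`. -/
def tv {n : ℕ} (i j : Fin n) :
    MvPolynomial (Fin n) (ZMod 2) →ₐ[ZMod 2] MvPolynomial (Fin n) (ZMod 2) :=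
  aeval fun k => if k = i then X i + X j else X k

lemma tv_X {n : ℕ} (i j k : Fin n) : tv i j (X k) = if k = i then X i + X j else X k := by
  simp [tv]

lemma tv_X_self {n : ℕ} (i j : Fin n) : tv i j (X i) = X i + X j := by
  simp [tv]

lemma tv_X_ne {n : ℕ} {i j k : Fin n} (h : k ≠ i) : tv i j (X k) = X k := by
  simp [tv, h]

lemma tv_C {n : ℕ} (i j : Fin n) (c : ZMod 2) : tv i j (C c) = C c :=
  (tv i j).commutes c

lemma tv_lf {n : ℕ} (i j : Fin n) (v : Fin n → ZMod 2) :
    tv i j (lf v) = lf (v + Pi.single j (v i)) := by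
  rw [lf_add, lf_single, lf, map_sum]
  have : ∀ k, tv i j (C (v k) * X k) = C (v k) * X k + if k = i then C (v i) * X j else 0 := by
    intro k
    rw [map_mul, tv_C, tv_X]
    split_ifs with h
    · subst h; ring
    · ring
  simp_rw [this]
  rw [Finset.sum_add_distrib]
  simp

/-- A ring map permuting the linear forms preserves the product. -/
lemma FP_map_eq {n : ℕ} {R : Type*} [CommRing R] (φ f : MvPolynomial (Fin n) (ZMod 2) →+* R)
    (σ : (Fin n → ZMod 2) → (Fin n → ZMod 2)) (hσ : Function.Injective σ)
    (h : ∀ v, φ (lf v) = f (lf (σ v))) : (FP n).map φ = (FP n).map f := by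
  rw [FP, Polynomial.map_prod, Polynomial.map_prod]
  refine Fintype.prod_equiv (Equiv.ofBijective σ (Finite.injective_iff_bijective.mp hσ)) _ _ ?_
  intro v
  simp [h]

lemma FP_tv {n : ℕ} {i j : Fin n} (hij : i ≠ j) :
    (FP n).map (tv i j : _ →+* _) = FP n := by
  have := FP_map_eq (tv i j : _ →+* _) (RingHom.id (MvPolynomial (Fin n) (ZMod 2)))
    (fun v => v + Pi.single j (v i)) ?_ ?_
  · rwa [Polynomial.map_id] at this
  · apply Function.Involutive.injective
    intro v
    dsimp only
    rw [add_assoc, Pi.add_apply, Pi.single_eq_of_ne hij, add_zero, ← Pi.single_add,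
      CharTwo.add_self_eq_zero, Pi.single_zero, add_zero]
  · intro v
    exact tv_lf i j v

lemma FP_coeff_tv {n : ℕ} {i j : Fin n} (hij : i ≠ j) (k : ℕ) :
    tv i j ((FP n).coeff k) = (FP n).coeff k := by
  conv_rhs => rw [← FP_tv hij, Polynomial.coeff_map]
  rfl

/-- Restriction to the hyperplane where the last variable vanishes. -/
def rho (n : ℕ) : MvPolynomial (Fin (n + 1)) (ZMod 2) →ₐ[ZMod 2] MvPolynomial (Fin n) (ZMod 2) :=
  aeval (Fin.snoc (α := fun _ => MvPolynomial (Fin n) (ZMod 2)) X 0)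

/-- The inclusion of the polynomials in the first variables. -/
def iot (n : ℕ) : MvPolynomial (Fin n) (ZMod 2) →ₐ[ZMod 2] MvPolynomial (Fin (n + 1)) (ZMod 2) :=
  rename Fin.castSucc

lemma rho_last (n : ℕ) : rho n (X (Fin.last n)) = 0 := by simp [rho]

lemma rho_cast {n : ℕ} (i : Fin n) : rho n (X i.castSucc) = X i := by simp [rho]

lemma iot_X {n : ℕ} (i : Fin n) : iot n (X i) = X i.castSucc := by simp [iot]

lemma rho_iot {n : ℕ} (a : MvPolynomial (Fin n) (ZMod 2)) : rho n (iot n a) = a := by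
  have : (rho n).comp (iot n) = AlgHom.id _ _ := by
    ext i
    simp [iot_X, rho_cast]
  exact congrArg (fun f => f a) this

lemma iot_inj (n : ℕ) : Function.Injective (iot n) :=
  Function.LeftInverse.injective rho_iot

lemma last_dvd {n : ℕ} (p : MvPolynomial (Fin (n + 1)) (ZMod 2)) :
    X (Fin.last n) ∣ p - iot n (rho n p) := by
  induction p using MvPolynomial.induction_on with
  | C a => simp [rho, iot]
  | add p q hp hq =>
    rw [map_add, map_add, add_sub_add_comm]
    exact dvd_add hp hq
  | mul_X p i hp =>
    rw [map_mul, map_mul]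
    induction i using Fin.lastCases with
    | last => simp [rho_last]
    | cast i =>
      rw [rho_cast, iot_X, ← sub_mul]
      exact hp.mul_right _

lemma rho_tv {n : ℕ} (i j : Fin n) (p : MvPolynomial (Fin (n + 1)) (ZMod 2)) :
    rho n (tv i.castSucc j.castSucc p) = tv i j (rho n p) := by
  have : (rho n).comp (tv i.castSucc j.castSucc) = (tv i j).comp (rho n) := by
    ext1 k
    simp only [AlgHom.comp_apply]
    induction k using Fin.lastCases with
    | last => rw [tv_X_ne (Fin.castSucc_lt_last i).ne', rho_last, map_zero]
    | cast k =>
      rw [rho_cast, tv_X, tv_X]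
      by_cases h : k = i
      · subst h; simp [rho_cast]
      · simp [h, rho_cast]
  exact congrArg (fun f => f p) this

lemma rho_lf_snoc {n : ℕ} (v : Fin n → ZMod 2) (c : ZMod 2) :
    rho n (lf (Fin.snoc (α := fun _ => ZMod 2) v c)) = lf v := by
  rw [lf, Fin.sum_univ_castSucc]
  simp only [Fin.snoc_castSucc, Fin.snoc_last, map_add, map_sum, map_mul, rho_cast, rho_last]
  simp [lf, rho]

lemma FP_rho (n : ℕ) : (FP (n + 1)).map (rho n : _ →+* _) = (FP n) ^ 2 := by
  rw [FP, Polynomial.map_prod, ← Equiv.prod_comp (Fin.snocEquiv fun _ => ZMod 2),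
    Fintype.prod_prod_type]
  have : ∀ c : ZMod 2, ∀ v : Fin n → ZMod 2,
      Polynomial.map (rho n : _ →+* _) (Polynomial.X + Polynomial.C
        (lf ((Fin.snocEquiv fun _ => ZMod 2) (c, v)))) = Polynomial.X + Polynomial.C (lf v) := by
    intro c v
    simp only [Polynomial.map_add, Polynomial.map_X, Polynomial.map_C]
    congr 2
    exact rho_lf_snoc v c
  simp_rw [this]
  rw [Finset.prod_const, FP]
  rfl

lemma FP_coeff_sq (n k : ℕ) : rho n ((FP (n + 1)).coeff (k * 2)) = ((FP n).coeff k) ^ 2 := by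
  have h := congrArg (fun P => Polynomial.coeff P (k * 2)) (FP_rho n)
  simp only [Polynomial.coeff_map] at h
  refine h.trans ?_
  rw [← Polynomial.map_frobenius_expand (p := 2), Polynomial.coeff_map,
    Polynomial.coeff_expand_mul (by norm_num), frobenius_def]

/-- First order Taylor expansion. -/
lemma taylor {n : ℕ} (i : Fin n) (a : MvPolynomial (Fin n) (ZMod 2)) :
    X (Fin.last n) ^ 2 ∣ tv i.castSucc (Fin.last n) (iot n a) - iot n a
      - X (Fin.last n) * iot n (pderiv i a) := by
  induction a using MvPolynomial.induction_on with
  | C c => simp [iot]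
  | add p q hp hq =>
    have := dvd_add hp hq
    convert this using 1
    simp only [map_add]
    ring
  | mul_X p k hp =>
    obtain ⟨r, hr⟩ := hp
    simp only [map_mul, Derivation.leibniz, map_add, smul_eq_mul, iot_X, pderiv_X]
    by_cases h : k = i
    · subst h
      rw [tv_X_self, Pi.single_eq_same, map_one]
      refine ⟨r * (X k.castSucc + X (Fin.last n)) + iot n (pderiv k p), ?_⟩
      linear_combination (X k.castSucc + X (Fin.last n)) * hr
    · rw [tv_X_ne (fun h' => h (Fin.castSucc_injective _ h')), Pi.single_eq_of_ne' (Ne.symm h),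
        map_zero]
      refine ⟨r * X k.castSucc, ?_⟩
      linear_combination X k.castSucc * hr

lemma pderiv_rho {n : ℕ} (i : Fin n) (p : MvPolynomial (Fin (n + 1)) (ZMod 2))
    (hp : tv i.castSucc (Fin.last n) p = p) : pderiv i (rho n p) = 0 := by
  obtain ⟨p1, h1⟩ := last_dvd p
  obtain ⟨r, hr⟩ := taylor i (rho n p)
  have hz : tv i.castSucc (Fin.last n) (X (Fin.last n)) = X (Fin.last n) :=
    tv_X_ne (Fin.castSucc_lt_last i).ne'
  have h2 : X (Fin.last n) ∣ tv i.castSucc (Fin.last n) p1 - p1 := by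
    clear h1
    induction p1 using MvPolynomial.induction_on with
    | C c => simp
    | add p q hp hq =>
      rw [map_add, add_sub_add_comm]
      exact dvd_add hp hq
    | mul_X p k hp =>
      obtain ⟨s, hs⟩ := hp
      rw [map_mul, tv_X]
      split_ifs with h
      · subst h
        refine ⟨s * (X i.castSucc + X (Fin.last n)) + p, ?_⟩
        linear_combination (X i.castSucc + X (Fin.last n)) * hs
      · refine ⟨s * X k, ?_⟩
        linear_combination X k * hs
  obtain ⟨s, hs⟩ := h2
  have h3 := congrArg (tv i.castSucc (Fin.last n)) h1
  rw [map_sub, map_mul, hz, hp] at h3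
  have h4 : X (Fin.last n) * iot n (pderiv i (rho n p)) =
      X (Fin.last n) * (X (Fin.last n) * (-r - s)) := by
    linear_combination h1 - h3 - hr - X (Fin.last n) * hs
  have h5 := congrArg (rho n) (mul_left_cancel₀ (X_ne_zero _) h4)
  rw [rho_iot, map_mul, rho_last, zero_mul] at h5
  exact h5

lemma totalDegree_lf {n : ℕ} {v : Fin n → ZMod 2} (hv : v ≠ 0) : (lf v).totalDegree = 1 :=
  (lf_hom v).totalDegree fun h => hv (lf_inj (h.trans lf_zero.symm))

lemma eq_one_of_deg {n : ℕ} {a : MvPolynomial (Fin n) (ZMod 2)} (ha : a ≠ 0)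
    (h : a.totalDegree = 0) : a = 1 := by
  rw [totalDegree_eq_zero_iff_eq_C] at h
  have h2 : ∀ c : ZMod 2, c ≠ 0 → c = 1 := by decide
  rw [h2 (coeff 0 a) (fun h0 => ha (by rw [h, h0, map_zero])), map_one] at h
  exact h

lemma lf_relPrime {n : ℕ} {v w : Fin n → ZMod 2} (hv : v ≠ 0) (hw : w ≠ 0) (hvw : v ≠ w) :
    IsRelPrime (lf v) (lf w) := by
  rintro d ⟨a, ha⟩ ⟨b, hb⟩
  have hv0 : lf v ≠ 0 := fun h => hv (lf_inj (h.trans lf_zero.symm))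
  have hw0 : lf w ≠ 0 := fun h => hw (lf_inj (h.trans lf_zero.symm))
  have hd : d ≠ 0 := by rintro rfl; simp at ha; exact hv0 ha
  have ha0 : a ≠ 0 := by rintro rfl; simp at ha; exact hv0 ha
  have hb0 : b ≠ 0 := by rintro rfl; simp at hb; exact hw0 hb
  have h1 := totalDegree_lf hv
  have h2 := totalDegree_lf hw
  rw [ha, totalDegree_mul_of_isDomain hd ha0] at h1
  rw [hb, totalDegree_mul_of_isDomain hd hb0] at h2
  by_cases h : d.totalDegree = 0
  · rw [eq_one_of_deg hd h]
    exact isUnit_one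
  · exfalso
    rw [eq_one_of_deg ha0 (by omega), mul_one] at ha
    rw [eq_one_of_deg hb0 (by omega), mul_one] at hb
    exact hvw (lf_inj (ha.trans hb.symm))

/-- Adding to the variable `X j` other variables by transvections. -/
lemma lf_dvd_of_X {n : ℕ} {p : MvPolynomial (Fin n) (ZMod 2)} (j : Fin n)
    (hp : ∀ k, k ≠ j → tv j k p = p) (hj : X j ∣ p) (v : Fin n → ZMod 2) (hv : v j = 1) :
    lf v ∣ p := by
  have key : ∀ t : Finset (Fin n), j ∉ t → lf (Pi.single j 1 + ∑ k ∈ t, Pi.single k (v k)) ∣ p := by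
    intro t
    induction t using Finset.induction_on with
    | empty => intro _; simpa [lf_single] using hj
    | insert k t hk ih =>
      intro hjt
      rw [Finset.mem_insert, not_or] at hjt
      have h1 := ih hjt.2
      rw [Finset.sum_insert hk]
      have h01 : ∀ c : ZMod 2, c = 0 ∨ c = 1 := by decide
      rcases h01 (v k) with h | h
      · rw [h, Pi.single_zero, zero_add]
        exact h1
      · have h2 := map_dvd (tv j k) h1
        rw [hp k (Ne.symm hjt.1), tv_lf] at h2
        convert h2 using 2
        have h3 : (Pi.single j 1 + ∑ k ∈ t, Pi.single k (v k) : Fin n → ZMod 2) j = 1 := by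
          rw [Pi.add_apply, Pi.single_eq_same, Finset.sum_apply, Finset.sum_eq_zero, add_zero]
          intro x hx
          rw [Pi.single_eq_of_ne]
          rintro rfl
          exact hjt.2 hx
        rw [h3, h]
        abel
  have h1 := key (Finset.univ.erase j) (Finset.notMem_erase _ _)
  rwa [← hv, Finset.add_sum_erase Finset.univ (fun k => Pi.single k (v k)) (Finset.mem_univ j),
    Finset.univ_sum_single] at h1

lemma DP_dvd {n : ℕ} {p : MvPolynomial (Fin (n + 1)) (ZMod 2)}
    (hp : ∀ i j, i ≠ j → tv i j p = p) (hl : X (Fin.last n) ∣ p) : DP (n + 1) ∣ p := by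
  have hX : ∀ k, X k ∣ p := by
    intro k
    by_cases hk : k = Fin.last n
    · rw [hk]; exact hl
    have h1 := map_dvd (tv (Fin.last n) k) hl
    rw [hp _ _ (Ne.symm hk), tv_X_self] at h1
    have h2 := map_dvd (tv k (Fin.last n)) h1
    rw [hp _ _ hk, map_add, tv_X_self, tv_X_ne (Ne.symm hk)] at h2
    have h3 : (X (Fin.last n) + (X k + X (Fin.last n)) : MvPolynomial (Fin (n + 1)) (ZMod 2))
        = X k := by
      rw [add_left_comm, CharTwo.add_self_eq_zero, add_zero]
    rwa [h3] at h2
  rw [DP]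
  refine Finset.prod_dvd_of_isRelPrime ?_ ?_
  · intro v hv w hw hvw
    exact lf_relPrime (Finset.mem_erase.mp hv).1 (Finset.mem_erase.mp hw).1 hvw
  · intro v hv
    obtain ⟨j, hj⟩ := Function.ne_iff.mp (Finset.mem_erase.mp hv).1
    have h01 : ∀ c : ZMod 2, c ≠ 0 → c = 1 := by decide
    exact lf_dvd_of_X j (fun k hk => hp j k (Ne.symm hk)) (hX j) v (h01 _ hj)

/-- Dickson's theorem over `𝔽₂` (generation). -/
lemma dickson_gen (n : ℕ) (p : MvPolynomial (Fin n) (ZMod 2))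
    (hp : ∀ i j, i ≠ j → tv i j p = p) :
    p ∈ Algebra.adjoin (ZMod 2) (Set.range (FP n).coeff) := by
  induction n with
  | zero =>
    rw [eq_C_of_isEmpty p]
    exact Subalgebra.algebraMap_mem _ _
  | succ n ih =>
    refine main_step {φ | ∃ i j, i ≠ j ∧ φ = tv i j} ?_ _ ?_ ?_ (DP (n + 1)) ?_ (DP_ne_zero _)
      (2 ^ (n + 1) - 1) ?_ (DP_hom _) ?_ p ?_
    · rintro φ ⟨i, j, -, rfl⟩ k
      rw [tv_X]
      split_ifs
      · exact (isHomogeneous_X _ _).add (isHomogeneous_X _ _)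
      · exact isHomogeneous_X _ _
    · rintro s ⟨k, rfl⟩
      exact FP_coeff_hom _ _
    · rintro s ⟨k, rfl⟩ φ ⟨i, j, hij, rfl⟩
      exact FP_coeff_tv hij k
    · exact ⟨1, FP_coeff_one _⟩
    · have := Nat.one_lt_two_pow (n := n + 1) (by omega)
      omega
    · intro p hp
      have hp' : ∀ i j, i ≠ j → tv i j p = p := fun i j hij => hp _ ⟨i, j, hij, rfl⟩
      obtain ⟨h, hh⟩ := exists_sq (rho n p) fun i =>
        pderiv_rho i p (hp' _ _ (Fin.castSucc_lt_last i).ne)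
      have hinv : ∀ i j, i ≠ j → tv i j h = h := by
        intro i j hij
        have h1 : tv i j (rho n p) = rho n p := by
          rw [← rho_tv, hp' _ _ (fun h' => hij (Fin.castSucc_injective _ h'))]
        rw [hh, map_pow] at h1
        exact frobenius_inj _ 2 h1
      have hex : ∀ h ∈ Algebra.adjoin (ZMod 2) (Set.range (FP n).coeff),
          ∃ q ∈ Algebra.adjoin (ZMod 2) (Set.range (FP (n + 1)).coeff), rho n q = h ^ 2 := by
        intro h hm
        induction hm using Algebra.adjoin_induction with
        | mem x hx =>
          obtain ⟨k, rfl⟩ := hx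
          exact ⟨_, Algebra.subset_adjoin ⟨k * 2, rfl⟩, FP_coeff_sq n k⟩
        | algebraMap r =>
          refine ⟨algebraMap _ _ (r ^ 2), Subalgebra.algebraMap_mem _ _, ?_⟩
          rw [AlgHom.commutes, map_pow]
        | add x y _ _ hx hy =>
          obtain ⟨q, hq, hq'⟩ := hx
          obtain ⟨r, hr, hr'⟩ := hy
          exact ⟨q + r, add_mem hq hr, by rw [map_add, hq', hr', CharTwo.add_sq]⟩
        | mul x y _ _ hx hy =>
          obtain ⟨q, hq, hq'⟩ := hx
          obtain ⟨r, hr, hr'⟩ := hy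
          exact ⟨q * r, mul_mem hq hr, by rw [map_mul, hq', hr', mul_pow]⟩
      obtain ⟨q, hq, hq'⟩ := hex h (ih h hinv)
      refine ⟨q, hq, DP_dvd ?_ ?_⟩
      · intro i j hij
        have : Algebra.adjoin (ZMod 2) (Set.range (FP (n + 1)).coeff) ≤
            AlgHom.equalizer (tv i j) (AlgHom.id _ _) := by
          refine Algebra.adjoin_le ?_
          rintro s ⟨k, rfl⟩
          exact FP_coeff_tv hij k
        have h2 : tv i j q = q := this hq
        rw [map_sub, hp' _ _ hij, h2]
      · have := last_dvd (p - q)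
        rwa [map_sub (rho n), hq', hh, sub_self, map_zero, sub_zero] at this
    · rintro φ ⟨i, j, hij, rfl⟩
      exact hp i j hij

lemma char_two_fac {S : Type*} [CommRing S] [CharP S 2] (T x y : S) :
    T * (T + x) * (T + y) * (T + x + y) =
      T ^ 4 + (x ^ 2 + x * y + y ^ 2) * T ^ 2 + (x ^ 2 * y + x * y ^ 2) * T := by
  have h2 : (2 : S) = 0 := CharTwo.two_eq_zero
  grind

lemma char_two_fac' {S : Type*} [CommRing S] [CharP S 2] (T z a b : S) :
    (T ^ 4 + a * T ^ 2 + b * T) * ((T + z) ^ 4 + a * (T + z) ^ 2 + b * (T + z)) =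
      T ^ 8 + (a ^ 2 + (z ^ 4 + a * z ^ 2 + b * z)) * T ^ 4 +
        (b ^ 2 + a * (z ^ 4 + a * z ^ 2 + b * z)) * T ^ 2 +
        b * (z ^ 4 + a * z ^ 2 + b * z) * T := by
  have h2 : (2 : S) = 0 := CharTwo.two_eq_zero
  have h4 : (T + z) ^ 4 = T ^ 4 + z ^ 4 := by
    linear_combination (2 * T ^ 3 * z + 3 * T ^ 2 * z ^ 2 + 2 * T * z ^ 3) * h2
  have h5 : (T + z) ^ 2 = T ^ 2 + z ^ 2 := CharTwo.add_sq T z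
  rw [h4, h5]
  linear_combination (a * T ^ 6 + b * T ^ 5 + a * b * T ^ 3) * h2

lemma prod_fin3 {M : Type*} [CommMonoid M] (g : (Fin 3 → ZMod 2) → M) :
    ∏ v, g v = g ![0, 0, 0] * g ![1, 0, 0] * g ![0, 1, 0] * g ![1, 1, 0] *
      (g ![0, 0, 1] * g ![1, 0, 1] * g ![0, 1, 1] * g ![1, 1, 1]) := by
  have : (Finset.univ : Finset (Fin 3 → ZMod 2)) = {![0, 0, 0], ![1, 0, 0], ![0, 1, 0], ![1, 1, 0],
      ![0, 0, 1], ![1, 0, 1], ![0, 1, 1], ![1, 1, 1]} := by decide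
  rw [this]
  rw [Finset.prod_insert (by decide), Finset.prod_insert (by decide),
    Finset.prod_insert (by decide), Finset.prod_insert (by decide),
    Finset.prod_insert (by decide), Finset.prod_insert (by decide),
    Finset.prod_insert (by decide), Finset.prod_singleton]
  simp only [mul_assoc]

lemma FP3_shape : ∃ a b c : MvPolynomial (Fin 3) (ZMod 2),
    FP 3 = Polynomial.X ^ 8 + Polynomial.C a * Polynomial.X ^ 4 +
      Polynomial.C b * Polynomial.X ^ 2 + Polynomial.C c * Polynomial.X := by
  have h1 := char_two_fac (S := Polynomial (MvPolynomial (Fin 3) (ZMod 2)))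
    Polynomial.X (Polynomial.C (X 0)) (Polynomial.C (X 1))
  have h2 := char_two_fac (S := Polynomial (MvPolynomial (Fin 3) (ZMod 2)))
    (Polynomial.X + Polynomial.C (X 2)) (Polynomial.C (X 0)) (Polynomial.C (X 1))
  have h3 := char_two_fac' (S := Polynomial (MvPolynomial (Fin 3) (ZMod 2)))
    Polynomial.X (Polynomial.C (X 2)) (Polynomial.C (X 0 ^ 2 + X 0 * X 1 + X 1 ^ 2))
    (Polynomial.C (X 0 ^ 2 * X 1 + X 0 * X 1 ^ 2))
  refine ⟨(X 0 ^ 2 + X 0 * X 1 + X 1 ^ 2) ^ 2 + (X 2 ^ 4 + (X 0 ^ 2 + X 0 * X 1 + X 1 ^ 2) * X 2 ^ 2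
      + (X 0 ^ 2 * X 1 + X 0 * X 1 ^ 2) * X 2),
    (X 0 ^ 2 * X 1 + X 0 * X 1 ^ 2) ^ 2 + (X 0 ^ 2 + X 0 * X 1 + X 1 ^ 2) *
      (X 2 ^ 4 + (X 0 ^ 2 + X 0 * X 1 + X 1 ^ 2) * X 2 ^ 2
      + (X 0 ^ 2 * X 1 + X 0 * X 1 ^ 2) * X 2),
    (X 0 ^ 2 * X 1 + X 0 * X 1 ^ 2) * (X 2 ^ 4 + (X 0 ^ 2 + X 0 * X 1 + X 1 ^ 2) * X 2 ^ 2
      + (X 0 ^ 2 * X 1 + X 0 * X 1 ^ 2) * X 2), ?_⟩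
  simp only [map_add, map_mul, map_pow] at h3 ⊢
  rw [← h3, ← h1, ← h2, FP, prod_fin3]
  simp only [lf, Fin.sum_univ_three, map_add, map_mul, Matrix.cons_val_zero, Matrix.cons_val_one,
    Matrix.cons_val, map_zero, map_one]
  ring

lemma iot_lf (v : Fin 3 → ZMod 2) : iot 3 (lf v) = ∑ j, C (v j) * X j.castSucc := by
  simp [lf, iot]

lemma span_eq : spanF2 ![xP, yP, zP] =
    Finset.univ.map ⟨fun v : Fin 3 → ZMod 2 => iot 3 (lf v), (iot_inj 3).comp lf_inj⟩ := by
  have hv : ![xP, yP, zP] = fun j : Fin 3 => (X j.castSucc : R4) := by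
    funext j
    fin_cases j <;> rfl
  rw [hv, spanF2]
  ext α
  simp only [Finset.mem_image, Finset.mem_univ, true_and, Finset.mem_map,
    Function.Embedding.coeFn_mk]
  constructor
  · rintro ⟨s, rfl⟩
    refine ⟨fun j => if j ∈ s then 1 else 0, ?_⟩
    have h : ∀ j : Fin 3, C (if j ∈ s then (1 : ZMod 2) else 0) * X j.castSucc =
        if j ∈ s then (X j.castSucc : R4) else 0 := by
      intro j
      split_ifs <;> simp
    rw [iot_lf]
    simp_rw [h]
    rw [Finset.sum_ite_mem, Finset.univ_inter]
  · rintro ⟨v, rfl⟩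
    refine ⟨Finset.univ.filter fun j => v j = 1, ?_⟩
    rw [iot_lf, Finset.sum_filter]
    refine Finset.sum_congr rfl fun j _ => ?_
    have h01 : ∀ c : ZMod 2, c = 0 ∨ c = 1 := by decide
    rcases h01 (v j) with h | h <;> simp [h]

/-- The product polynomial over `𝔽₂[x,y,z,w]`. -/
def GP : Polynomial R4 := (FP 3).map (iot 3 : _ →+* _)

lemma GP_eq : GP = ∏ v : Fin 3 → ZMod 2, (Polynomial.X + Polynomial.C (iot 3 (lf v))) := by
  rw [GP, FP, Polynomial.map_prod]
  refine Finset.prod_congr rfl fun v _ => ?_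
  simp

lemma dickson_eq_s8 (i k : ℕ) (hk : 2 ^ (3 - i) = k) (hk8 : k ≤ 8) :
    dickson ![xP, yP, zP] i = GP.coeff k := by
  have hc : Multiset.card (spanF2 ![xP, yP, zP]).val = 8 := by
    rw [Finset.card_val, span_eq, Finset.card_map]
    decide
  rw [dickson, hk, ← show Multiset.card (spanF2 ![xP, yP, zP]).val = 2 ^ 3 from hc,
    ← Multiset.prod_X_add_C_coeff _ (by rw [hc]; exact hk8), GP_eq, span_eq, Finset.map_val,
    Multiset.map_map]
  rfl

lemma b4_eq : b4 = GP.coeff 4 := dickson_eq_s8 1 4 rfl (by norm_num)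
lemma b6_eq : b6 = GP.coeff 2 := dickson_eq_s8 2 2 rfl (by norm_num)
lemma b7_eq : b7 = GP.coeff 1 := dickson_eq_s8 3 1 rfl (by norm_num)

lemma b8_eq : b8 = ∏ v : Fin 3 → ZMod 2, (X 3 + iot 3 (lf v)) := by
  rw [b8, prodAdd, span_eq, Finset.prod_map]
  rfl

lemma b8_eq_eval : b8 = GP.eval (X 3) := by
  rw [b8_eq, GP_eq, Polynomial.eval_prod]
  simp

lemma lf_snoc (v : Fin 3 → ZMod 2) (c : ZMod 2) :
    lf (Fin.snoc (α := fun _ => ZMod 2) v c) = C c * X (Fin.last 3) + iot 3 (lf v) := by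
  rw [lf, Fin.sum_univ_castSucc, iot_lf]
  simp only [Fin.snoc_castSucc, Fin.snoc_last]
  exact add_comm _ _

lemma b8_eq_lf : b8 = ∏ v : Fin 3 → ZMod 2, lf (Fin.snoc (α := fun _ => ZMod 2) v 1) := by
  rw [b8_eq]
  refine Finset.prod_congr rfl fun v _ => ?_
  rw [lf_snoc, map_one, one_mul]
  rfl

lemma GP_shape : GP = Polynomial.X ^ 8 + Polynomial.C b4 * Polynomial.X ^ 4 +
      Polynomial.C b6 * Polynomial.X ^ 2 + Polynomial.C b7 * Polynomial.X := by
  obtain ⟨a, b, c, h⟩ := FP3_shape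
  have h' : GP = Polynomial.X ^ 8 + Polynomial.C (iot 3 a) * Polynomial.X ^ 4 +
      Polynomial.C (iot 3 b) * Polynomial.X ^ 2 + Polynomial.C (iot 3 c) * Polynomial.X := by
    rw [GP, h]
    simp
  have h4 : b4 = iot 3 a := by
    rw [b4_eq, h']; simp [Polynomial.coeff_X_pow]
  have h6 : b6 = iot 3 b := by
    rw [b6_eq, h']; simp [Polynomial.coeff_X_pow]
  have h7 : b7 = iot 3 c := by
    rw [b7_eq, h']; simp [Polynomial.coeff_X_pow]
  rw [h4, h6, h7, h']

lemma GP_coeff_mem (k : ℕ) : GP.coeff k ∈ Algebra.adjoin (ZMod 2) {b4, b6, b7, b8} := by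
  have h4 : b4 ∈ Algebra.adjoin (ZMod 2) {b4, b6, b7, b8} := Algebra.subset_adjoin (by simp)
  have h6 : b6 ∈ Algebra.adjoin (ZMod 2) {b4, b6, b7, b8} := Algebra.subset_adjoin (by simp)
  have h7 : b7 ∈ Algebra.adjoin (ZMod 2) {b4, b6, b7, b8} := Algebra.subset_adjoin (by simp)
  have hite : ∀ (P : Prop) [Decidable P],
      (if P then (1 : R4) else 0) ∈ Algebra.adjoin (ZMod 2) {b4, b6, b7, b8} := by
    intro P _
    split_ifs
    · exact one_mem _
    · exact zero_mem _
  rw [GP_shape]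
  simp only [Polynomial.coeff_add, Polynomial.coeff_C_mul, Polynomial.coeff_X_pow,
    Polynomial.coeff_X]
  exact add_mem (add_mem (add_mem (hite _) (mul_mem h4 (hite _))) (mul_mem h6 (hite _)))
    (mul_mem h7 (hite _))

lemma matAct_X (g : Matrix (Fin 4) (Fin 4) (ZMod 2)) (i : Fin 4) :
    matAct g (X i) = ∑ j, C (g i j) * X j := by
  simp [matAct]

lemma matAct_C (g : Matrix (Fin 4) (Fin 4) (ZMod 2)) (c : ZMod 2) :
    matAct g (C c) = C c := (matAct g).commutes c

lemma matAct_comp (g h : Matrix (Fin 4) (Fin 4) (ZMod 2)) (p : R4) :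
    matAct h (matAct g p) = matAct (g * h) p := by
  have : (matAct h).comp (matAct g) = matAct (g * h) := by
    ext1 i
    rw [AlgHom.comp_apply, matAct_X, matAct_X, map_sum]
    simp_rw [map_mul, matAct_C, matAct_X, Matrix.mul_apply, map_sum, Finset.mul_sum, Finset.sum_mul]
    rw [Finset.sum_comm]
    simp_rw [map_mul, mul_assoc]
  exact congrArg (fun f => f p) this

lemma matAct_inj (g : GL (Fin 4) (ZMod 2)) :
    Function.Injective (matAct (g : Matrix (Fin 4) (Fin 4) (ZMod 2))) := by
  apply Function.LeftInverse.injective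
    (g := matAct ((g⁻¹ : GL (Fin 4) (ZMod 2)) : Matrix (Fin 4) (Fin 4) (ZMod 2)))
  intro p
  rw [matAct_comp, ← Units.val_mul, mul_inv_cancel, Units.val_one]
  have : matAct 1 = AlgHom.id _ _ := by
    ext1 i
    rw [matAct_X, Finset.sum_eq_single i]
    · simp
    · intro j _ hj
      simp [Matrix.one_apply_ne' hj]
    · simp
  rw [this]
  rfl

lemma memGL31.apply {g : GL (Fin 4) (ZMod 2)} (hg : memGL31 g) (i : Fin 3) :
    (g : Matrix (Fin 4) (Fin 4) (ZMod 2)) i.castSucc (Fin.last 3) = 0 := by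
  obtain ⟨h0, h1, h2⟩ := hg
  fin_cases i
  · exact h0
  · exact h1
  · exact h2

lemma memGL31.last {g : GL (Fin 4) (ZMod 2)} (hg : memGL31 g) :
    (g : Matrix (Fin 4) (Fin 4) (ZMod 2)) (Fin.last 3) (Fin.last 3) = 1 := by
  have h01 : ∀ c : ZMod 2, c ≠ 0 → c = 1 := by decide
  refine h01 _ fun h => ?_
  have hdet : (g : Matrix (Fin 4) (Fin 4) (ZMod 2)).det = 0 := by
    refine Matrix.det_eq_zero_of_column_eq_zero (Fin.last 3) fun i => ?_
    induction i using Fin.lastCases with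
    | last => exact h
    | cast i => exact hg.apply i
  have := (Matrix.isUnit_iff_isUnit_det _).mp g.isUnit
  rw [hdet] at this
  exact not_isUnit_zero this

lemma matAct_lf' (M : Matrix (Fin 4) (Fin 4) (ZMod 2))
    (hM : ∀ i : Fin 3, M i.castSucc (Fin.last 3) = 0) (v : Fin 3 → ZMod 2) :
    matAct M (iot 3 (lf v)) =
      iot 3 (lf fun j : Fin 3 => ∑ i : Fin 3, v i * M i.castSucc j.castSucc) := by
  rw [iot_lf, iot_lf, map_sum]
  have h : ∀ i : Fin 3, matAct M (C (v i) * X i.castSucc) = ∑ j : Fin 3,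
      C (v i * M i.castSucc j.castSucc) * X j.castSucc := by
    intro i
    rw [map_mul, matAct_C, matAct_X, Fin.sum_univ_castSucc, hM, map_zero, zero_mul, add_zero,
      Finset.mul_sum]
    exact Finset.sum_congr rfl fun j _ => by rw [map_mul, mul_assoc]
  rw [Finset.sum_congr rfl fun i _ => h i, Finset.sum_comm]
  refine Finset.sum_congr rfl fun j _ => ?_
  rw [map_sum, Finset.sum_mul]

lemma matAct_lf {g : GL (Fin 4) (ZMod 2)} (hg : memGL31 g) (v : Fin 3 → ZMod 2) :
    matAct (g : Matrix (Fin 4) (Fin 4) (ZMod 2)) (iot 3 (lf v)) =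
      iot 3 (lf fun j : Fin 3 => ∑ i : Fin 3, v i *
        (g : Matrix (Fin 4) (Fin 4) (ZMod 2)) i.castSucc j.castSucc) :=
  matAct_lf' _ hg.apply v

lemma matAct_last {g : GL (Fin 4) (ZMod 2)} (hg : memGL31 g) :
    matAct (g : Matrix (Fin 4) (Fin 4) (ZMod 2)) (X (Fin.last 3)) = X (Fin.last 3) +
      iot 3 (lf fun j =>
        (g : Matrix (Fin 4) (Fin 4) (ZMod 2)) (Fin.last 3) (Fin.castSucc j)) := by
  rw [matAct_X, Fin.sum_univ_castSucc, hg.last, map_one, one_mul, add_comm, iot_lf]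

lemma GP_matAct {g : GL (Fin 4) (ZMod 2)} (hg : memGL31 g) :
    GP.map (matAct (g : Matrix (Fin 4) (Fin 4) (ZMod 2)) : R4 →+* R4) = GP := by
  rw [GP, Polynomial.map_map]
  refine FP_map_eq _ _ (fun v j => ∑ i, v i *
        (g : Matrix (Fin 4) (Fin 4) (ZMod 2)) (Fin.castSucc i) (Fin.castSucc j)) ?_
    fun v => matAct_lf hg v
  intro v w hvw
  have h1 := congrArg (fun u => iot 3 (lf u)) hvw
  dsimp only at h1
  rw [← matAct_lf hg, ← matAct_lf hg] at h1
  exact lf_inj (iot_inj 3 (matAct_inj g h1))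

lemma GP_coeff_matAct {g : GL (Fin 4) (ZMod 2)} (hg : memGL31 g) (k : ℕ) :
    matAct (g : Matrix (Fin 4) (Fin 4) (ZMod 2)) (GP.coeff k) = GP.coeff k := by
  conv_rhs => rw [← GP_matAct hg, Polynomial.coeff_map]
  rfl

lemma b8_matAct {g : GL (Fin 4) (ZMod 2)} (hg : memGL31 g) :
    matAct (g : Matrix (Fin 4) (Fin 4) (ZMod 2)) b8 = b8 := by
  have h1 : matAct (g : Matrix (Fin 4) (Fin 4) (ZMod 2)) b8 =
      (GP.map (matAct (g : Matrix (Fin 4) (Fin 4) (ZMod 2)) : R4 →+* R4)).eval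
        (matAct (g : Matrix (Fin 4) (Fin 4) (ZMod 2)) (X (Fin.last 3))) := by
    rw [b8_eq_eval]
    exact (Polynomial.eval_map_apply
      (matAct (g : Matrix (Fin 4) (Fin 4) (ZMod 2)) : R4 →+* R4) _).symm
  rw [h1, GP_matAct hg, matAct_last hg, b8_eq, GP_eq, Polynomial.eval_prod]
  refine Fintype.prod_equiv (Equiv.addLeft fun j =>
        (g : Matrix (Fin 4) (Fin 4) (ZMod 2)) (Fin.last 3) (Fin.castSucc j)) _ _ fun v => ?_
  rw [Equiv.coe_addLeft, lf_add, map_add]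
  simp only [Polynomial.eval_add, Polynomial.eval_X, Polynomial.eval_C]
  rw [add_assoc]
  rfl

lemma gen_matAct {g : GL (Fin 4) (ZMod 2)} (hg : memGL31 g) (s : R4)
    (hs : s ∈ ({b4, b6, b7, b8} : Set R4)) :
    matAct (g : Matrix (Fin 4) (Fin 4) (ZMod 2)) s = s := by
  rcases hs with rfl | rfl | rfl | rfl
  · rw [b4_eq]; exact GP_coeff_matAct hg _
  · rw [b6_eq]; exact GP_coeff_matAct hg _
  · rw [b7_eq]; exact GP_coeff_matAct hg _
  · exact b8_matAct hg

lemma tv_eq_matAct (i j : Fin 4) (hij : i ≠ j) (hj : j ≠ 3) :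
    ∃ g : GL (Fin 4) (ZMod 2), memGL31 g ∧
      tv i j = matAct (g : Matrix (Fin 4) (Fin 4) (ZMod 2)) := by
  refine ⟨Matrix.GeneralLinearGroup.mkOfDetNeZero (Matrix.transvection i j 1) ?_, ?_, ?_⟩
  · rw [Matrix.det_transvection_of_ne i j hij]
    exact one_ne_zero
  · have h : ∀ k : Fin 4, k ≠ 3 → (Matrix.transvection i j (1 : ZMod 2)) k 3 = 0 := by
      intro k hk
      rw [Matrix.transvection, Matrix.add_apply, Matrix.one_apply_ne hk,
        Matrix.single_apply_of_col_ne _ _ hj, add_zero]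
    exact ⟨h 0 (by decide), h 1 (by decide), h 2 (by decide)⟩
  · ext1 k
    change _ = matAct (Matrix.transvection i j (1 : ZMod 2)) (X k)
    rw [matAct_X, tv_X]
    simp_rw [Matrix.transvection, Matrix.add_apply, map_add, add_mul]
    rw [Finset.sum_add_distrib, Finset.sum_eq_single k (by
      intro b _ hb
      rw [Matrix.one_apply_ne' hb, map_zero, zero_mul]) (by simp), Matrix.one_apply_eq, map_one,
      one_mul]
    split_ifs with h
    · subst h
      rw [Finset.sum_eq_single j]
      · simp
      · intro b _ hb
        simp [Matrix.single_apply_of_col_ne _ _ (Ne.symm hb)]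
      · simp
    · rw [Finset.sum_eq_zero, add_zero]
      intro b _
      simp [Matrix.single_apply_of_row_ne (Ne.symm h)]

lemma gen_hom (s : R4) (hs : s ∈ ({b4, b6, b7, b8} : Set R4)) : ∃ d, s.IsHomogeneous d := by
  have h : ∀ k, ∃ d, (GP.coeff k).IsHomogeneous d := by
    intro k
    obtain ⟨d, hd⟩ := FP_coeff_hom 3 k
    refine ⟨d, ?_⟩
    rw [GP, Polynomial.coeff_map]
    exact hd.rename_isHomogeneous
  rcases hs with rfl | rfl | rfl | rfl
  · rw [b4_eq]; exact h _
  · rw [b6_eq]; exact h _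
  · rw [b7_eq]; exact h _
  · rw [b8_eq_lf]
    exact ⟨_, IsHomogeneous.prod _ _ (fun _ => 1) fun i _ => lf_hom _⟩

lemma snoc_ne_zero (v : Fin 3 → ZMod 2) :
    (Fin.snoc (α := fun _ => ZMod 2) v 1 : Fin 4 → ZMod 2) ≠ 0 := by
  intro h
  have := congrFun h (Fin.last 3)
  rw [Fin.snoc_last] at this
  exact one_ne_zero this

lemma b8_dvd {p : R4} (hp : ∀ k, k ≠ Fin.last 3 → tv (Fin.last 3) k p = p)
    (hl : X (Fin.last 3) ∣ p) : b8 ∣ p := by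
  rw [b8_eq_lf]
  refine Finset.prod_dvd_of_isRelPrime ?_ ?_
  · intro v _ w _ hvw
    refine lf_relPrime (snoc_ne_zero v) (snoc_ne_zero w) fun h => hvw ?_
    funext j
    have := congrFun h j.castSucc
    rwa [Fin.snoc_castSucc, Fin.snoc_castSucc] at this
  · intro v _
    exact lf_dvd_of_X (Fin.last 3) hp hl _ (Fin.snoc_last _ _)

lemma invariants_mem (p : R4) (hp : ∀ g : GL (Fin 4) (ZMod 2), memGL31 g →
    matAct (g : Matrix (Fin 4) (Fin 4) (ZMod 2)) p = p) :
    p ∈ Algebra.adjoin (ZMod 2) {b4, b6, b7, b8} := by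
  have hinv : ∀ q ∈ Algebra.adjoin (ZMod 2) {b4, b6, b7, b8}, ∀ g : GL (Fin 4) (ZMod 2),
      memGL31 g → matAct (g : Matrix (Fin 4) (Fin 4) (ZMod 2)) q = q := by
    intro q hq g hg
    have : Algebra.adjoin (ZMod 2) {b4, b6, b7, b8} ≤
        AlgHom.equalizer (matAct (g : Matrix (Fin 4) (Fin 4) (ZMod 2))) (AlgHom.id _ _) :=
      Algebra.adjoin_le fun s hs => gen_matAct hg s hs
    exact this hq
  refine main_step {φ | ∃ g : GL (Fin 4) (ZMod 2), memGL31 g ∧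
    φ = matAct (g : Matrix (Fin 4) (Fin 4) (ZMod 2))} ?_ _ gen_hom ?_ b8 (by simp) ?_ 8
    (by norm_num) ?_ ?_ p ?_
  · rintro φ ⟨g, -, rfl⟩ i
    rw [matAct_X]
    exact IsHomogeneous.sum _ _ _ fun _ _ => isHomogeneous_C_mul_X _ _
  · rintro s hs φ ⟨g, hg, rfl⟩
    exact gen_matAct hg s hs
  · rw [b8_eq_lf, Finset.prod_ne_zero_iff]
    intro v _ h
    exact snoc_ne_zero v (lf_inj (h.trans lf_zero.symm))
  · rw [b8_eq_lf]
    have := IsHomogeneous.prod Finset.univ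
      (fun v : Fin 3 → ZMod 2 => lf (Fin.snoc (α := fun _ => ZMod 2) v 1)) (fun _ => 1)
      fun i _ => lf_hom _
    have hc : ∑ _v : Fin 3 → ZMod 2, 1 = 8 := by decide
    rwa [hc] at this
  · intro p hp
    have hp' : ∀ i j : Fin 4, i ≠ j → j ≠ 3 → tv i j p = p := by
      intro i j hij hj
      obtain ⟨g, hg, h⟩ := tv_eq_matAct i j hij hj
      rw [h]
      exact hp _ ⟨g, hg, rfl⟩
    have hmem : iot 3 (rho 3 p) ∈ Algebra.adjoin (ZMod 2) {b4, b6, b7, b8} := by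
      have h1 := dickson_gen 3 (rho 3 p) (by
        intro i j hij
        rw [← rho_tv, hp' _ _ (fun h' => hij (Fin.castSucc_injective _ h'))
          (Fin.castSucc_lt_last j).ne])
      have h2 : Algebra.adjoin (ZMod 2) (Set.range (FP 3).coeff) ≤
          (Algebra.adjoin (ZMod 2) {b4, b6, b7, b8}).comap (iot 3) := by
        refine Algebra.adjoin_le ?_
        rintro s ⟨k, rfl⟩
        have := GP_coeff_mem k
        rw [GP, Polynomial.coeff_map] at this
        exact this
      exact h2 h1
    refine ⟨_, hmem, b8_dvd ?_ (last_dvd p)⟩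
    intro k hk
    obtain ⟨g, hg, h⟩ := tv_eq_matAct (Fin.last 3) k (Ne.symm hk) hk
    rw [map_sub, hp' _ _ (Ne.symm hk) hk, h, hinv _ hmem g hg]
  · rintro φ ⟨g, hg, rfl⟩
    exact hp g hg

lemma gen_isIntegral (A : Subalgebra (ZMod 2) R4) (h4 : b4 ∈ A) (h6 : b6 ∈ A) (h7 : b7 ∈ A)
    (h8 : b8 ∈ A) : Algebra.IsIntegral A R4 := by
  have key : ∀ t c : R4, c ∈ A → GP.eval t = c → IsIntegral A t := by
    intro t c hc ht
    refine ⟨Polynomial.X ^ 8 + (Polynomial.C ⟨b4, h4⟩ * Polynomial.X ^ 4 +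
      Polynomial.C ⟨b6, h6⟩ * Polynomial.X ^ 2 + Polynomial.C ⟨b7, h7⟩ * Polynomial.X +
      Polynomial.C ⟨-c, neg_mem hc⟩), ?_, ?_⟩
    · refine Polynomial.monic_X_pow_add ?_
      refine lt_of_le_of_lt (b := 4) ?_ (by norm_num)
      compute_degree
    · simp only [Polynomial.eval₂_add, Polynomial.eval₂_mul, Polynomial.eval₂_pow,
        Polynomial.eval₂_X, Polynomial.eval₂_C]
      rw [GP_shape] at ht
      simp only [Polynomial.eval_add, Polynomial.eval_mul, Polynomial.eval_pow,
        Polynomial.eval_X, Polynomial.eval_C] at ht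
      change t ^ 8 + (b4 * t ^ 4 + b6 * t ^ 2 + b7 * t + -c) = 0
      linear_combination ht
  refine ⟨fun p => ?_⟩
  induction p using MvPolynomial.induction_on with
  | C a =>
    exact isIntegral_algebraMap (R := A) (x := algebraMap (ZMod 2) A a)
  | add p q hp hq => exact hp.add hq
  | mul_X p i hp =>
    refine hp.mul ?_
    induction i using Fin.lastCases with
    | last => exact key _ b8 h8 b8_eq_eval.symm
    | cast i =>
      have : GP.eval (X i.castSucc) = 0 := by
        rw [GP_eq, Polynomial.eval_prod]
        refine Finset.prod_eq_zero (Finset.mem_univ (Pi.single i 1)) ?_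
        rw [lf_single, map_one, one_mul, iot_X]
        simp only [Polynomial.eval_add, Polynomial.eval_X, Polynomial.eval_C]
        exact CharTwo.add_self_eq_zero _
      exact key _ 0 (zero_mem A) this

theorem stmt_8 :
    (∀ p : R4,
        (∀ g : GL (Fin 4) (ZMod 2), memGL31 g →
            matAct (g : Matrix (Fin 4) (Fin 4) (ZMod 2)) p = p) ↔
          p ∈ Algebra.adjoin (ZMod 2) {b4, b6, b7, b8}) ∧
    AlgebraicIndependent (ZMod 2) ![b4, b6, b7, b8] := by
  refine ⟨fun p => ⟨invariants_mem p, fun hp g hg => ?_⟩, ?_⟩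
  · have : Algebra.adjoin (ZMod 2) {b4, b6, b7, b8} ≤
        AlgHom.equalizer (matAct (g : Matrix (Fin 4) (Fin 4) (ZMod 2))) (AlgHom.id _ _) :=
      Algebra.adjoin_le fun s hs => gen_matAct hg s hs
    exact this hp
  · have hmem : ∀ i, ![b4, b6, b7, b8] i ∈
        Algebra.adjoin (ZMod 2) (Set.range ![b4, b6, b7, b8]) :=
      fun i => Algebra.subset_adjoin ⟨i, rfl⟩
    have hint : Algebra.IsIntegral (Algebra.adjoin (ZMod 2) (Set.range ![b4, b6, b7, b8])) R4 :=
      gen_isIntegral _ (hmem 0) (hmem 1) (hmem 2) (hmem 3)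
    have halg : Algebra.IsAlgebraic
        (Algebra.adjoin (ZMod 2) (Set.range ![b4, b6, b7, b8])) R4 := inferInstance
    have := Algebra.IsAlgebraic.isTranscendenceBasis_of_lift_le_trdeg_of_finite (ZMod 2)
      ![b4, b6, b7, b8] (by rw [MvPolynomial.trdeg_of_isDomain]; simp)
    exact this.1
end
end

section
/- The subalgebra of F_2[x,y,z,w] consisting of the polynomials invariant under every element of GL^2_{2'}(F_2) equals the F_2-subalgebra generated by c_2, c_3, c'_4, c''_4; moreover c_2, c_3, c'_4, c''_4 are algebraically independent over F_2. -/
noncomputable section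

open MvPolynomial

/-- Membership in the subgroup `GL²₂'(𝔽₂) ≤ GL₄(𝔽₂)` of matrices `g` with
`g₁₃ = g₁₄ = g₂₃ = g₂₄ = 0`, `g₃₃ = g₄₄ = 1` and `g₃₄ = g₄₃ = 0`
(in one-based indexing). -/
def memGL22' (g : GL (Fin 4) (ZMod 2)) : Prop :=
  (g : Matrix (Fin 4) (Fin 4) (ZMod 2)) 0 2 = 0 ∧
  (g : Matrix (Fin 4) (Fin 4) (ZMod 2)) 0 3 = 0 ∧
  (g : Matrix (Fin 4) (Fin 4) (ZMod 2)) 1 2 = 0 ∧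
  (g : Matrix (Fin 4) (Fin 4) (ZMod 2)) 1 3 = 0 ∧
  (g : Matrix (Fin 4) (Fin 4) (ZMod 2)) 2 2 = 1 ∧
  (g : Matrix (Fin 4) (Fin 4) (ZMod 2)) 3 3 = 1 ∧
  (g : Matrix (Fin 4) (Fin 4) (ZMod 2)) 2 3 = 0 ∧
  (g : Matrix (Fin 4) (Fin 4) (ZMod 2)) 3 2 = 0


lemma span_xy : spanF2 ![xP, yP] = {0, xP, yP, xP + yP} := by
  classical
  unfold spanF2
  ext a
  have h : (Finset.univ : Finset (Finset (Fin 2))) = {∅, {0}, {1}, {0,1}} := by decide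
  simp [h]

lemma xP_ne_zero : xP ≠ 0 := X_ne_zero _
lemma yP_ne_zero : yP ≠ 0 := X_ne_zero _
lemma xP_ne_yP : xP ≠ yP := fun h => by
  have := X_injective h
  simp at this

lemma two_R4 : (2 : R4) = 0 := CharTwo.two_eq_zero

lemma xP_add_yP_ne : xP + yP ≠ 0 := fun h => xP_ne_yP (CharTwo.add_eq_zero.mp h)

lemma span_val : (spanF2 ![xP, yP]).val = 0 ::ₘ xP ::ₘ yP ::ₘ {xP + yP} := by
  classical
  have h1 := xP_ne_zero
  have h2 := yP_ne_zero
  have h3 := xP_ne_yP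
  have h4 := xP_add_yP_ne
  rw [span_xy]
  rw [Finset.insert_val_of_notMem, Finset.insert_val_of_notMem, Finset.insert_val_of_notMem]
  · rfl
  · simp [h1]
  · simp [h2, h3]
  · simp [h1.symm, h2.symm, h4.symm]

lemma c2_eq : c2 = xP ^ 2 + xP * yP + yP ^ 2 := by
  unfold c2 dickson
  rw [span_val]
  simp [Multiset.esymm, Multiset.powersetCard_cons, Multiset.powersetCard_one]
  grind [two_R4]

lemma c3_eq : c3 = xP * yP * (xP + yP) := by
  unfold c3 dickson
  rw [span_val]
  simp [Multiset.esymm, Multiset.powersetCard_cons, Multiset.powersetCard_one]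
  grind [two_R4]

lemma prodAdd_eq (w : R4) : prodAdd ![xP, yP] w = w ^ 4 + c2 * w ^ 2 + c3 * w := by
  rw [c2_eq, c3_eq]
  unfold prodAdd Finset.prod
  rw [span_val]
  simp
  grind [two_R4]

lemma c4'_eq : c4' = zP ^ 4 + c2 * zP ^ 2 + c3 * zP := prodAdd_eq _
lemma c4''_eq : c4'' = wP ^ 4 + c2 * wP ^ 2 + c3 * wP := prodAdd_eq _

/-- fixing by the group -/
def IsInv (p : R4) : Prop := ∀ g : GL (Fin 4) (ZMod 2), memGL22' g →
            matAct (g : Matrix (Fin 4) (Fin 4) (ZMod 2)) p = p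

lemma fix_all (g : GL (Fin 4) (ZMod 2)) (hg : memGL22' g) :
    matAct g c2 = c2 ∧ matAct g c3 = c3 ∧ matAct g c4' = c4' ∧ matAct g c4'' = c4'' := by
  obtain ⟨h1, h2, h3, h4, h5, h6, h7, h8⟩ := hg
  have hdet : (g : Matrix (Fin 4) (Fin 4) (ZMod 2)).det ≠ 0 := by
    have := (Matrix.isUnit_iff_isUnit_det _).mp g.isUnit
    exact this.ne_zero
  generalize (g : Matrix (Fin 4) (Fin 4) (ZMod 2)) = M at *
  have hd : M 0 0 * M 1 1 - M 0 1 * M 1 0 ≠ 0 := by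
    intro h
    apply hdet
    rw [CharTwo.sub_eq_add] at h
    rw [← h]
    simp [Matrix.det_succ_row_zero, Fin.sum_univ_succ, Fin.succAbove, *]
  have ex : matAct M xP = C (M 0 0) * xP + C (M 0 1) * yP := by
    simp [matAct, xP, yP, Fin.sum_univ_four, *]
  have ey : matAct M yP = C (M 1 0) * xP + C (M 1 1) * yP := by
    simp [matAct, xP, yP, Fin.sum_univ_four, *]
  have ez : matAct M zP = zP + C (M 2 0) * xP + C (M 2 1) * yP := by
    simp [matAct, xP, yP, zP, Fin.sum_univ_four, *]; ring
  have ew : matAct M wP = wP + C (M 3 0) * xP + C (M 3 1) * yP := by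
    simp [matAct, xP, yP, wP, Fin.sum_univ_four, *]; ring
  have key : ∀ a : ZMod 2, a = 0 ∨ a = 1 := by decide
  have e2 : matAct M c2 = c2 := by
    rw [c2_eq]
    simp only [map_add, map_mul, map_pow, ex, ey]
    rcases key (M 0 0) with a | a <;> rcases key (M 0 1) with b | b <;>
    rcases key (M 1 0) with c | c <;> rcases key (M 1 1) with d | d <;>
    simp [a, b, c, d] at hd ⊢ <;> grind [two_R4]
  have e3 : matAct M c3 = c3 := by
    rw [c3_eq]
    simp only [map_add, map_mul, ex, ey]
    rcases key (M 0 0) with a | a <;> rcases key (M 0 1) with b | b <;>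
    rcases key (M 1 0) with c | c <;> rcases key (M 1 1) with d | d <;>
    simp [a, b, c, d] at hd ⊢ <;> grind [two_R4]
  refine ⟨e2, e3, ?_, ?_⟩
  · rw [c4'_eq]
    simp only [map_add, map_mul, map_pow, e2, e3, ez]
    rw [c2_eq, c3_eq]
    rcases key (M 2 0) with a | a <;> rcases key (M 2 1) with b | b <;>
    simp [a, b] <;> grind [two_R4]
  · rw [c4''_eq]
    simp only [map_add, map_mul, map_pow, e2, e3, ew]
    rw [c2_eq, c3_eq]
    rcases key (M 3 0) with a | a <;> rcases key (M 3 1) with b | b <;>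
    simp [a, b] <;> grind [two_R4]

/-- Descent step. -/
lemma descent (A : Subalgebra (ZMod 2) R4) (u p : R4) (F : Polynomial A) (hF : F.Monic)
    (hu : Polynomial.aeval u F = 0) (s : Finset R4) (hs : F.natDegree ≤ s.card)
    (hp : p ∈ (Algebra.adjoin A {u}).restrictScalars (ZMod 2))
    (hg : ∀ v ∈ s, ∃ g : R4 →ₐ[ZMod 2] R4, (∀ a ∈ A, g a = a) ∧ g u = v ∧ g p = p) :
    p ∈ A := by
  rw [Subalgebra.mem_restrictScalars, Algebra.adjoin_singleton_eq_range_aeval] at hp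
  obtain ⟨q, hq⟩ := hp
  set r := q %ₘ F with hr
  have hrp : Polynomial.aeval u r = p := by
    rw [← hq]
    conv_rhs => erw [← Polynomial.modByMonic_add_div q F]
    simp [hu, hr]
  by_cases hF1 : F = 1
  · simp [hF1] at hu
  set P : Polynomial R4 := r.map (algebraMap A R4) - Polynomial.C p with hP
  have hroot : ∀ v ∈ s, P.eval v = 0 := by
    intro v hv
    obtain ⟨g, hgA, hgu, hgp⟩ := hg v hv
    have : g (Polynomial.aeval u r) = Polynomial.aeval v r := by
      rw [Polynomial.aeval_eq_sum_range, Polynomial.aeval_eq_sum_range, map_sum]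
      refine Finset.sum_congr rfl fun i _ => ?_
      rw [Algebra.smul_def, Algebra.smul_def, map_mul, map_pow, hgu]
      congr 1
      exact hgA _ (r.coeff i).2
    rw [hP, Polynomial.eval_sub, Polynomial.eval_C, Polynomial.eval_map_algebraMap, ← this, hrp, hgp,
      sub_self]
  have hdeg : P.natDegree < F.natDegree := by
    have h1 : r.natDegree < F.natDegree := Polynomial.natDegree_modByMonic_lt _ hF hF1
    refine lt_of_le_of_lt (Polynomial.natDegree_sub_le _ _) ?_
    simp only [Polynomial.natDegree_C]
    have := Polynomial.natDegree_map_le (f := algebraMap A R4) (p := r)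
    omega
  have hP0 : P = 0 :=
    Polynomial.eq_zero_of_natDegree_lt_card_of_eval_eq_zero' P s hroot (by omega)
  have : (r.coeff 0 : R4) = p := by
    have := congrArg (fun P => Polynomial.coeff P 0) hP0
    simp only [hP, Polynomial.coeff_sub, Polynomial.coeff_map, Polynomial.coeff_C_zero,
      Polynomial.coeff_zero] at this
    exact sub_eq_zero.mp this
  rw [← this]
  exact (r.coeff 0).2

/-- adjoining one element -/
def ext1 (A : Subalgebra (ZMod 2) R4) (u : R4) : Subalgebra (ZMod 2) R4 :=
  (Algebra.adjoin A {u}).restrictScalars (ZMod 2)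

lemma mem_ext1 (A : Subalgebra (ZMod 2) R4) (u : R4) : u ∈ ext1 A u :=
  Algebra.subset_adjoin (R := A) (Set.mem_singleton u)

lemma le_ext1 (A : Subalgebra (ZMod 2) R4) (u : R4) : A ≤ ext1 A u :=
  fun a ha => (Algebra.adjoin A {u}).algebraMap_mem ⟨a, ha⟩

lemma fix_ext1 (A : Subalgebra (ZMod 2) R4) (u : R4) (g : R4 →ₐ[ZMod 2] R4)
    (hA : ∀ a ∈ A, g a = a) (hu : g u = u) : ∀ a ∈ ext1 A u, g a = a := by
  intro a ha
  have ha' : a ∈ Algebra.adjoin A {u} := ha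
  induction ha' using Algebra.adjoin_induction with
  | mem x hx => rw [Set.mem_singleton_iff.mp hx, hu]
  | algebraMap r => exact hA _ r.2
  | add x y _ _ h1 h2 => rw [map_add, h1 ‹_›, h2 ‹_›]
  | mul x y _ _ h1 h2 => rw [map_mul, h1 ‹_›, h2 ‹_›]

/-- the algebra generated by the four invariants -/
def A0 : Subalgebra (ZMod 2) R4 := Algebra.adjoin (ZMod 2) {c2, c3, c4', c4''}

lemma c2_mem : c2 ∈ A0 := Algebra.subset_adjoin (by simp)
lemma c3_mem : c3 ∈ A0 := Algebra.subset_adjoin (by simp)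
lemma c4'_mem : c4' ∈ A0 := Algebra.subset_adjoin (by simp)
lemma c4''_mem : c4'' ∈ A0 := Algebra.subset_adjoin (by simp)

lemma fix_A0 (g : GL (Fin 4) (ZMod 2)) (hg : memGL22' g) : ∀ a ∈ A0, matAct g a = a := by
  intro a ha
  obtain ⟨h1, h2, h3, h4⟩ := fix_all g hg
  induction ha using Algebra.adjoin_induction with
  | mem x hx =>
    simp only [Set.mem_insert_iff, Set.mem_singleton_iff] at hx
    rcases hx with rfl | rfl | rfl | rfl <;> assumption
  | algebraMap r => exact AlgHom.commutes _ _
  | add x y _ _ h1 h2 => rw [map_add, h1, h2]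
  | mul x y _ _ h1 h2 => rw [map_mul, h1, h2]

lemma exists_act (p : R4) (hp : IsInv p) (M : Matrix (Fin 4) (Fin 4) (ZMod 2)) (hM : M * M = 1)
    (hm : M 0 2 = 0 ∧ M 0 3 = 0 ∧ M 1 2 = 0 ∧ M 1 3 = 0 ∧ M 2 2 = 1 ∧ M 3 3 = 1 ∧
      M 2 3 = 0 ∧ M 3 2 = 0) :
    (∀ a ∈ A0, matAct M a = a) ∧ matAct M p = p :=
  ⟨fix_A0 ⟨M, M, hM, hM⟩ hm, hp ⟨M, M, hM, hM⟩ hm⟩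

lemma quartic (A : Subalgebra (ZMod 2) R4) (a b c u : R4) (ha : a ∈ A) (hb : b ∈ A) (hc : c ∈ A)
    (h : u ^ 4 + a * u ^ 2 + b * u + c = 0) :
    ∃ F : Polynomial A, F.Monic ∧ F.natDegree = 4 ∧ Polynomial.aeval u F = 0 := by
  refine ⟨Polynomial.X ^ 4 + Polynomial.C ⟨a, ha⟩ * Polynomial.X ^ 2 +
    Polynomial.C ⟨b, hb⟩ * Polynomial.X + Polynomial.C ⟨c, hc⟩, ?_, ?_, ?_⟩
  · monicity!
  · compute_degree!
  · simpa [Polynomial.aeval_def] using h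

lemma cubic (A : Subalgebra (ZMod 2) R4) (b c u : R4) (hb : b ∈ A) (hc : c ∈ A)
    (h : u ^ 3 + b * u + c = 0) :
    ∃ F : Polynomial A, F.Monic ∧ F.natDegree = 3 ∧ Polynomial.aeval u F = 0 := by
  refine ⟨Polynomial.X ^ 3 +
    Polynomial.C ⟨b, hb⟩ * Polynomial.X + Polynomial.C ⟨c, hc⟩, ?_, ?_, ?_⟩
  · monicity!
  · compute_degree!
  · simpa [Polynomial.aeval_def] using h

lemma quadratic (A : Subalgebra (ZMod 2) R4) (b c u : R4) (hb : b ∈ A) (hc : c ∈ A)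
    (h : u ^ 2 + b * u + c = 0) :
    ∃ F : Polynomial A, F.Monic ∧ F.natDegree = 2 ∧ Polynomial.aeval u F = 0 := by
  refine ⟨Polynomial.X ^ 2 +
    Polynomial.C ⟨b, hb⟩ * Polynomial.X + Polynomial.C ⟨c, hc⟩, ?_, ?_, ?_⟩
  · monicity!
  · compute_degree!
  · simpa [Polynomial.aeval_def] using h

lemma card_four (u : R4) : ∃ s : Finset R4, s.card = 4 ∧
    ∀ v ∈ s, v = u ∨ v = u + xP ∨ v = u + yP ∨ v = u + (xP + yP) := by
  classical
  refine ⟨(spanF2 ![xP, yP]).image (u + ·), ?_, ?_⟩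
  · rw [Finset.card_image_of_injective _ (add_right_injective u), Finset.card, span_val]
    simp
  · intro v hv
    rw [span_xy] at hv
    simp at hv
    tauto

def A1 := ext1 A0 xP
def A2 := ext1 A1 yP
def A3 := ext1 A2 zP

lemma top_le : ∀ p, p ∈ ext1 A3 wP := by
  intro p
  have hp : p ∈ Algebra.adjoin (ZMod 2) (Set.range (X : Fin 4 → R4)) := by
    rw [MvPolynomial.adjoin_range_X]; trivial
  refine (Algebra.adjoin_le ?_ : _ ≤ ext1 A3 wP) hp
  rintro _ ⟨i, rfl⟩
  fin_cases i
  · exact le_ext1 _ _ (le_ext1 _ _ (le_ext1 _ _ (mem_ext1 _ _)))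
  · exact le_ext1 _ _ (le_ext1 _ _ (mem_ext1 _ _))
  · exact le_ext1 _ _ (mem_ext1 _ _)
  · exact mem_ext1 _ _

lemma w_eqn : wP ^ 4 + c2 * wP ^ 2 + c3 * wP + c4'' = 0 := by
  rw [c4''_eq]; grind [two_R4]
lemma z_eqn : zP ^ 4 + c2 * zP ^ 2 + c3 * zP + c4' = 0 := by
  rw [c4'_eq]; grind [two_R4]
lemma y_eqn : yP ^ 3 + c2 * yP + c3 = 0 := by
  rw [c2_eq, c3_eq]; grind [two_R4]
lemma x_eqn : xP ^ 3 + c2 * xP + c3 = 0 := by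
  rw [c2_eq, c3_eq]; grind [two_R4]
lemma y_eqn2 : yP ^ 2 + xP * yP + (c2 + xP ^ 2) = 0 := by
  rw [c2_eq]; grind [two_R4]

lemma le1 : A0 ≤ A1 := le_ext1 _ _
lemma le2 : A1 ≤ A2 := le_ext1 _ _
lemma le3 : A2 ≤ A3 := le_ext1 _ _

lemma act_eval (M : Matrix (Fin 4) (Fin 4) (ZMod 2)) (i : Fin 4) :
    matAct M (X i) = C (M i 0) * xP + C (M i 1) * yP + C (M i 2) * zP + C (M i 3) * wP := by
  simp [matAct, Fin.sum_univ_four, xP, yP, zP, wP]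

lemma act_of (M : Matrix (Fin 4) (Fin 4) (ZMod 2)) :
    matAct M xP = C (M 0 0) * xP + C (M 0 1) * yP + C (M 0 2) * zP + C (M 0 3) * wP ∧
    matAct M yP = C (M 1 0) * xP + C (M 1 1) * yP + C (M 1 2) * zP + C (M 1 3) * wP ∧
    matAct M zP = C (M 2 0) * xP + C (M 2 1) * yP + C (M 2 2) * zP + C (M 2 3) * wP ∧
    matAct M wP = C (M 3 0) * xP + C (M 3 1) * yP + C (M 3 2) * zP + C (M 3 3) * wP :=
  ⟨act_eval M 0, act_eval M 1, act_eval M 2, act_eval M 3⟩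

lemma step_w (p : R4) (hp : IsInv p) : p ∈ A3 := by
  obtain ⟨F, hF, hd, hu⟩ := quartic A3 c2 c3 c4'' wP (le3 (le2 (le1 c2_mem)))
    (le3 (le2 (le1 c3_mem))) (le3 (le2 (le1 c4''_mem))) w_eqn
  obtain ⟨s, hs, hv⟩ := card_four wP
  refine descent A3 wP p F hF hu s (by omega) (top_le p) fun v h => ?_
  have main : ∀ a b : ZMod 2, ∃ g : R4 →ₐ[ZMod 2] R4, (∀ a ∈ A3, g a = a) ∧
      g wP = C a * xP + C b * yP + wP ∧ g p = p := by
    intro a b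
    let M : Matrix (Fin 4) (Fin 4) (ZMod 2) := !![1,0,0,0;0,1,0,0;0,0,1,0;a,b,0,1]
    have hM : M * M = 1 := by revert a b; decide
    obtain ⟨h1, h2⟩ := exists_act p hp M hM (by simp [M])
    obtain ⟨ex, ey, ez, ew⟩ := act_of M
    simp [M] at ex ey ez ew
    exact ⟨matAct M, fix_ext1 _ _ _ (fix_ext1 _ _ _ (fix_ext1 _ _ _ h1 ex) ey) ez, ew, h2⟩
  rcases hv v h with rfl | rfl | rfl | rfl
  · simpa using main 0 0
  · simpa [add_comm] using main 1 0
  · simpa [add_comm] using main 0 1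
  · simpa [add_comm] using main 1 1

lemma step_z (p : R4) (hp : IsInv p) : p ∈ A2 := by
  obtain ⟨F, hF, hd, hu⟩ := quartic A2 c2 c3 c4' zP (le2 (le1 c2_mem))
    (le2 (le1 c3_mem)) (le2 (le1 c4'_mem)) z_eqn
  obtain ⟨s, hs, hv⟩ := card_four zP
  refine descent A2 zP p F hF hu s (by omega) (step_w p hp) fun v h => ?_
  have main : ∀ a b : ZMod 2, ∃ g : R4 →ₐ[ZMod 2] R4, (∀ a ∈ A2, g a = a) ∧
      g zP = C a * xP + C b * yP + zP ∧ g p = p := by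
    intro a b
    let M : Matrix (Fin 4) (Fin 4) (ZMod 2) := !![1,0,0,0;0,1,0,0;a,b,1,0;0,0,0,1]
    have hM : M * M = 1 := by revert a b; decide
    obtain ⟨h1, h2⟩ := exists_act p hp M hM (by simp [M])
    obtain ⟨ex, ey, ez, ew⟩ := act_of M
    simp [M] at ex ey ez ew
    exact ⟨matAct M, fix_ext1 _ _ _ (fix_ext1 _ _ _ h1 ex) ey, ez, h2⟩
  rcases hv v h with rfl | rfl | rfl | rfl
  · simpa using main 0 0
  · simpa [add_comm] using main 1 0
  · simpa [add_comm] using main 0 1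
  · simpa [add_comm] using main 1 1

lemma step_y (p : R4) (hp : IsInv p) : p ∈ A1 := by
  classical
  have hx : xP ∈ A1 := mem_ext1 _ _
  obtain ⟨F, hF, hd, hu⟩ := quadratic A1 xP (c2 + xP ^ 2) yP hx
    (add_mem (le1 c2_mem) (pow_mem hx 2)) y_eqn2
  have hs : ({yP, xP + yP} : Finset R4).card = 2 := by
    rw [Finset.card_pair]
    simpa using xP_ne_zero
  refine descent A1 yP p F hF hu _ (hd.trans hs.symm).le (step_z p hp) fun v h => ?_
  have main : ∀ a : ZMod 2, ∃ g : R4 →ₐ[ZMod 2] R4, (∀ a ∈ A1, g a = a) ∧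
      g yP = C a * xP + yP ∧ g p = p := by
    intro a
    let M : Matrix (Fin 4) (Fin 4) (ZMod 2) := !![1,0,0,0;a,1,0,0;0,0,1,0;0,0,0,1]
    have hM : M * M = 1 := by revert a; decide
    obtain ⟨h1, h2⟩ := exists_act p hp M hM (by simp [M])
    obtain ⟨ex, ey, ez, ew⟩ := act_of M
    simp [M] at ex ey ez ew
    exact ⟨matAct M, fix_ext1 _ _ _ h1 ex, ey, h2⟩
  simp only [Finset.mem_insert, Finset.mem_singleton] at h
  rcases h with rfl | rfl
  · simpa using main 0
  · simpa using main 1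

lemma step_x (p : R4) (hp : IsInv p) : p ∈ A0 := by
  classical
  obtain ⟨F, hF, hd, hu⟩ := cubic A0 c2 c3 xP c2_mem c3_mem x_eqn
  have hs : ({xP, yP, xP + yP} : Finset R4).card = 3 := by
    rw [Finset.card_eq_three]
    exact ⟨_, _, _, xP_ne_yP, by simpa using yP_ne_zero, by simpa using xP_ne_zero, rfl⟩
  refine descent A0 xP p F hF hu _ (hd.trans hs.symm).le (step_y p hp) fun v h => ?_
  have main : ∀ M : Matrix (Fin 4) (Fin 4) (ZMod 2), M * M = 1 →
      (M 0 2 = 0 ∧ M 0 3 = 0 ∧ M 1 2 = 0 ∧ M 1 3 = 0 ∧ M 2 2 = 1 ∧ M 3 3 = 1 ∧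
      M 2 3 = 0 ∧ M 3 2 = 0) → ∃ g : R4 →ₐ[ZMod 2] R4, (∀ a ∈ A0, g a = a) ∧
      g xP = C (M 0 0) * xP + C (M 0 1) * yP ∧ g p = p := by
    intro M hM hm
    obtain ⟨h1, h2⟩ := exists_act p hp M hM hm
    obtain ⟨ex, -⟩ := act_of M
    exact ⟨matAct M, h1, by simpa [hm.1, hm.2.1] using ex, h2⟩
  simp only [Finset.mem_insert, Finset.mem_singleton] at h
  rcases h with rfl | rfl | rfl
  · simpa using main 1 (by simp) (by simp)
  · simpa using main !![0,1,0,0;1,0,0,0;0,0,1,0;0,0,0,1] (by decide) (by simp)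
  · simpa using main !![1,1,0,0;0,1,0,0;0,0,1,0;0,0,0,1] (by decide) (by simp)

lemma range_c : Set.range ![c2, c3, c4', c4''] = {c2, c3, c4', c4''} := by
  ext a
  simp only [Set.mem_insert_iff, Set.mem_singleton_iff]
  simp
  tauto

lemma integral_A0 : Algebra.IsIntegral A0 R4 := by
  refine ⟨fun p => ?_⟩
  have hp : p ∈ Algebra.adjoin (ZMod 2) (Set.range (X : Fin 4 → R4)) := by
    rw [MvPolynomial.adjoin_range_X]; trivial
  refine (Algebra.adjoin_le ?_ :
    _ ≤ (integralClosure A0 R4).restrictScalars (ZMod 2)) hp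
  rintro _ ⟨i, rfl⟩
  fin_cases i
  · obtain ⟨F, hF, -, hu⟩ := cubic A0 c2 c3 xP c2_mem c3_mem x_eqn
    exact ⟨F, hF, hu⟩
  · obtain ⟨F, hF, -, hu⟩ := cubic A0 c2 c3 yP c2_mem c3_mem y_eqn
    exact ⟨F, hF, hu⟩
  · obtain ⟨F, hF, -, hu⟩ := quartic A0 c2 c3 c4' zP c2_mem c3_mem c4'_mem z_eqn
    exact ⟨F, hF, hu⟩
  · obtain ⟨F, hF, -, hu⟩ := quartic A0 c2 c3 c4'' wP c2_mem c3_mem c4''_mem w_eqn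
    exact ⟨F, hF, hu⟩

lemma alg_indep_s9 : AlgebraicIndependent (ZMod 2) ![c2, c3, c4', c4''] := by
  have h0 := integral_A0
  have h1 : Algebra.IsIntegral (Algebra.adjoin (ZMod 2) (Set.range ![c2, c3, c4', c4''])) R4 := by
    rw [range_c]; exact h0
  have h2 : Algebra.IsAlgebraic (Algebra.adjoin (ZMod 2) (Set.range ![c2, c3, c4', c4''])) R4 :=
    inferInstance
  refine (Algebra.IsAlgebraic.isTranscendenceBasis_of_le_trdeg_of_finite (ZMod 2) _ ?_).1
  rw [MvPolynomial.trdeg_of_isDomain]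
  simp

theorem stmt_9 :
    (∀ p : R4,
        (∀ g : GL (Fin 4) (ZMod 2), memGL22' g →
            matAct (g : Matrix (Fin 4) (Fin 4) (ZMod 2)) p = p) ↔
          p ∈ Algebra.adjoin (ZMod 2) {c2, c3, c4', c4''}) ∧
    AlgebraicIndependent (ZMod 2) ![c2, c3, c4', c4''] := by
  exact ⟨fun p => ⟨fun h => step_x p h, fun h g hg => fix_A0 g hg p h⟩, alg_indep_s9⟩
end
end

section
/- Let β ∈ F_2[x,y,z,w] lie in the F_2-subalgebra generated by b_4, b_6, b_7, b_8, and suppose κ(β) = β. Then β lies in the F_2-subalgebra generated by a_8, a_12, a_14, a_15. -/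
noncomputable section

open MvPolynomial

/-- The `𝔽₂`-algebra automorphism `κ` of `𝔽₂[x,y,z,w]` fixing `x` and `y` and
exchanging `z` and `w`. -/
def kappaEnd : R4 →ₐ[ZMod 2] R4 := aeval ![xP, yP, wP, zP]

/-! ### Spans -/

lemma mem_spanF2 {R : Type*} [CommRing R] [Algebra (ZMod 2) R] {n : ℕ} (v : Fin n → R) (a : R) :
    a ∈ spanF2 v ↔ a ∈ Submodule.span (ZMod 2) (Set.range v) := by
  classical
  unfold spanF2
  simp only [Finset.mem_image, Finset.mem_univ, true_and]
  constructor
  · rintro ⟨s, rfl⟩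
    exact Submodule.sum_mem _ fun j _ => Submodule.subset_span ⟨j, rfl⟩
  · intro h
    obtain ⟨c, rfl⟩ := (Submodule.mem_span_range_iff_exists_fun (ZMod 2)).1 h
    refine ⟨Finset.univ.filter (fun j => c j = 1), ?_⟩
    rw [Finset.sum_filter]
    refine Finset.sum_congr rfl fun j _ => ?_
    have : ∀ t : ZMod 2, t = 0 ∨ t = 1 := by decide
    rcases this (c j) with h | h <;> simp [h]

lemma spanF2_eq_of_le {R : Type*} [CommRing R] [Algebra (ZMod 2) R] {n : ℕ} (v v' : Fin n → R)
    (h : ∀ i, v i ∈ Submodule.span (ZMod 2) (Set.range v'))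
    (h' : ∀ i, v' i ∈ Submodule.span (ZMod 2) (Set.range v)) : spanF2 v = spanF2 v' := by
  ext a
  rw [mem_spanF2, mem_spanF2]
  have : Submodule.span (ZMod 2) (Set.range v) = Submodule.span (ZMod 2) (Set.range v') := by
    apply le_antisymm <;> rw [Submodule.span_le] <;> rintro _ ⟨i, rfl⟩
    · exact h i
    · exact h' i
  rw [this]

/-- Algebra automorphisms map spans to spans. -/
lemma map_spanF2 {R : Type*} [CommRing R] {n : ℕ} (v : Fin n → R)
    (f : R →+* R) (hf : Function.Injective f) :
    (spanF2 v).map ⟨f, hf⟩ = spanF2 (f ∘ v) := by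
  classical
  ext a
  simp [spanF2, Finset.mem_map]

lemma map_esymm' {R : Type*} [CommRing R] (s : Multiset R) (f : R →+* R) (k : ℕ) :
    f (s.esymm k) = (s.map f).esymm k := by
  simp only [Multiset.esymm, Multiset.powersetCard_map, Multiset.map_map, map_multiset_sum]
  congr 1
  apply Multiset.map_congr rfl
  intro x _
  simp [map_multiset_prod]

lemma map_dickson {R : Type*} [CommRing R] {n : ℕ} (v : Fin n → R) (i : ℕ)
    (f : R →+* R) (hf : Function.Injective f) : f (dickson v i) = dickson (f ∘ v) i := by
  unfold dickson
  rw [← map_spanF2 v f hf, map_esymm']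
  rfl

lemma map_prodAdd {R : Type*} [CommRing R] {n : ℕ} (v : Fin n → R) (w : R)
    (f : R →+* R) (hf : Function.Injective f) : f (prodAdd v w) = prodAdd (f ∘ v) (f w) := by
  unfold prodAdd
  rw [← map_spanF2 v f hf, map_prod, Finset.prod_map]
  simp

lemma prodAdd_add {R : Type*} [CommRing R] [Algebra (ZMod 2) R] {n : ℕ} (v : Fin n → R) (w u : R)
    (hu : u ∈ Submodule.span (ZMod 2) (Set.range v)) : prodAdd v (w + u) = prodAdd v w := by
  unfold prodAdd
  refine Finset.prod_bij (fun a _ => u + a) ?_ ?_ ?_ ?_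
  · intro a ha
    rw [mem_spanF2] at ha ⊢
    exact add_mem hu ha
  · intro a _ b _ h
    exact add_left_cancel h
  · intro b hb
    rw [mem_spanF2] at hb
    exact ⟨b - u, (mem_spanF2 _ _).2 (sub_mem hb hu), by simp⟩
  · intro a _
    ring

/-! ### Linear substitutions -/

/-- The substitution `X i ↦ ∑ j, M i j • X j`. -/
def subst (M : Matrix (Fin 4) (Fin 4) (ZMod 2)) : R4 →ₐ[ZMod 2] R4 :=
  aeval fun i => ∑ j, C (M i j) * X j

lemma subst_X (M : Matrix (Fin 4) (Fin 4) (ZMod 2)) (i : Fin 4) :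
    subst M (X i) = ∑ j, C (M i j) * X j := by
  simp [subst]

lemma subst_mul (M N : Matrix (Fin 4) (Fin 4) (ZMod 2)) :
    subst (M * N) = (subst N).comp (subst M) := by
  apply MvPolynomial.algHom_ext
  intro i
  rw [AlgHom.comp_apply, subst_X, subst_X, map_sum]
  simp only [map_mul, subst_X, algHom_C, algebraMap_eq, Matrix.mul_apply, map_sum, Finset.mul_sum,
    Finset.sum_mul]
  rw [Finset.sum_comm]
  refine Finset.sum_congr rfl fun j _ => Finset.sum_congr rfl fun k _ => by ring

lemma subst_one : subst 1 = AlgHom.id _ _ := by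
  apply MvPolynomial.algHom_ext
  intro i
  rw [subst_X]
  simp [Matrix.one_apply]

/-- invariance under the shear `X i ↦ X i + X j` -/
def shear (i j : Fin 4) : R4 →ₐ[ZMod 2] R4 := aeval (Function.update X i (X i + X j))

lemma shear_self (i j : Fin 4) : shear i j (X i) = X i + X j := by simp [shear]

lemma shear_of_ne {i j k : Fin 4} (h : k ≠ i) : shear i j (X k) = X k := by simp [shear, h]

lemma shear_shear {i j : Fin 4} (h : i ≠ j) (p : R4) : shear i j (shear i j p) = p := by
  have : (shear i j).comp (shear i j) = AlgHom.id _ _ := by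
    apply MvPolynomial.algHom_ext
    intro k
    rw [AlgHom.comp_apply]
    by_cases hk : k = i
    · subst hk
      rw [shear_self, map_add, shear_self, shear_of_ne h.symm, add_assoc, CharTwo.add_self_eq_zero]
      simp
    · rw [shear_of_ne hk, shear_of_ne hk]; rfl
  exact DFunLike.congr_fun this p

lemma shear_injective {i j : Fin 4} (h : i ≠ j) : Function.Injective (shear i j) :=
  (show Function.LeftInverse (shear i j) (shear i j) from shear_shear h).injective

lemma shear_eq_subst {i j : Fin 4} (h : i ≠ j) : shear i j = subst (Matrix.transvection i j 1) := by
  apply MvPolynomial.algHom_ext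
  intro k
  rw [subst_X]
  by_cases hk : k = i
  · subst hk
    rw [shear_self]
    simp [Matrix.transvection, Matrix.one_apply, Matrix.single_apply, add_mul, Finset.sum_add_distrib]
  · rw [shear_of_ne hk]
    simp [Matrix.transvection, Matrix.one_apply, Ne.symm hk]

/-- The first three variables. -/
def v3 : Fin 3 → R4 := ![xP, yP, zP]

lemma v3_eq (i : Fin 3) : v3 i = X i.castSucc := by
  fin_cases i <;> rfl

lemma exists_castSucc (j : Fin 4) (hj : j ≠ 3) : ∃ k : Fin 3, j = k.castSucc := by
  revert j; decide

lemma span_shear (i j : Fin 4) (hij : i ≠ j) (hj : j ≠ 3) :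
    spanF2 (shear i j ∘ v3) = spanF2 v3 := by
  obtain ⟨j, rfl⟩ : ∃ k : Fin 3, j = k.castSucc := exists_castSucc j hj
  have key : ∀ k, (shear i j.castSucc ∘ v3) k = v3 k ∨
      (k ≠ j ∧ (shear i j.castSucc ∘ v3) k = v3 k + v3 j) := by
    intro k
    by_cases hk : k.castSucc = i
    · right
      subst hk
      refine ⟨fun h => hij (by rw [h]), ?_⟩
      rw [Function.comp_apply, v3_eq, v3_eq]
      exact shear_self _ _
    · left
      rw [Function.comp_apply, v3_eq]
      exact shear_of_ne hk
  have hj' : (shear i j.castSucc ∘ v3) j = v3 j := by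
    rcases key j with h | h
    · exact h
    · exact absurd rfl h.1
  apply spanF2_eq_of_le
  · intro k
    rcases key k with h | h
    · rw [h]; exact Submodule.subset_span ⟨k, rfl⟩
    · rw [h.2]; exact add_mem (Submodule.subset_span ⟨k, rfl⟩) (Submodule.subset_span ⟨j, rfl⟩)
  · intro k
    rcases key k with h | h
    · rw [← h]; exact Submodule.subset_span ⟨k, rfl⟩
    · have : v3 k = (shear i j.castSucc ∘ v3) k - (shear i j.castSucc ∘ v3) j := by
        rw [h.2, hj']; ring
      rw [this]
      exact sub_mem (Submodule.subset_span ⟨k, rfl⟩) (Submodule.subset_span ⟨j, rfl⟩)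

lemma dickson_shear (i j : Fin 4) (hij : i ≠ j) (hj : j ≠ 3) (n : ℕ) :
    shear i j (dickson v3 n) = dickson v3 n := by
  have := map_dickson v3 n (shear i j : R4 →+* R4) (shear_injective hij)
  refine this.trans ?_
  unfold dickson
  congr 2
  exact span_shear i j hij hj

lemma b8_shear (i j : Fin 4) (hij : i ≠ j) (hj : j ≠ 3) :
    shear i j (prodAdd v3 wP) = prodAdd v3 wP := by
  have := map_prodAdd v3 wP (shear i j : R4 →+* R4) (shear_injective hij)
  refine this.trans ?_
  have h1 : ∀ w, prodAdd (⇑(shear i j : R4 →+* R4) ∘ v3) w = prodAdd v3 w := by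
    intro w
    unfold prodAdd
    congr 1
    exact span_shear i j hij hj
  rw [h1]
  change prodAdd v3 (shear i j (X 3)) = _
  by_cases hi : i = 3
  · subst hi
    rw [shear_self]
    apply prodAdd_add
    obtain ⟨j, rfl⟩ : ∃ k : Fin 3, j = k.castSucc := exists_castSucc j hj
    rw [← v3_eq]
    exact Submodule.subset_span ⟨j, rfl⟩
  · rw [shear_of_ne (Ne.symm hi)]; rfl

lemma adjoin_shear (i j : Fin 4) (hij : i ≠ j) (hj : j ≠ 3) (β : R4)
    (hβ : β ∈ Algebra.adjoin (ZMod 2) {b4, b6, b7, b8}) : shear i j β = β := by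
  have : Algebra.adjoin (ZMod 2) {b4, b6, b7, b8} ≤ AlgHom.equalizer (shear i j) (AlgHom.id _ _) := by
    rw [Algebra.adjoin_le_iff]
    rintro p hp
    simp only [Set.mem_insert_iff, Set.mem_singleton_iff] at hp
    rcases hp with rfl | rfl | rfl | rfl
    · exact dickson_shear i j hij hj 1
    · exact dickson_shear i j hij hj 2
    · exact dickson_shear i j hij hj 3
    · exact b8_shear i j hij hj
  exact this hβ

lemma kappaEnd_X (i : Fin 4) : kappaEnd (X i) = X (Equiv.swap 2 3 i) := by
  unfold kappaEnd
  rw [aeval_X]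
  fin_cases i <;> rfl

lemma kappa_conj (i j : Fin 4) (p : R4) :
    kappaEnd (shear (Equiv.swap 2 3 i) (Equiv.swap 2 3 j) p) = shear i j (kappaEnd p) := by
  have : kappaEnd.comp (shear (Equiv.swap 2 3 i) (Equiv.swap 2 3 j)) = (shear i j).comp kappaEnd := by
    apply MvPolynomial.algHom_ext
    intro k
    simp only [AlgHom.comp_apply]
    rw [kappaEnd_X]
    by_cases hk : k = Equiv.swap 2 3 i
    · subst hk
      rw [shear_self, Equiv.swap_apply_self, shear_self, map_add, kappaEnd_X, kappaEnd_X,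
        Equiv.swap_apply_self, Equiv.swap_apply_self]
    · rw [shear_of_ne hk, kappaEnd_X, shear_of_ne]
      rintro rfl
      simp at hk
  exact DFunLike.congr_fun this p

lemma shear_inv (β : R4) (hβ : β ∈ Algebra.adjoin (ZMod 2) {b4, b6, b7, b8})
    (hκ : kappaEnd β = β) (i j : Fin 4) (hij : i ≠ j) : shear i j β = β := by
  by_cases hj : j = 3
  · have h := kappa_conj i j β
    rw [hκ, adjoin_shear _ _ _ _ β hβ, hκ] at h
    · exact h.symm
    · exact fun h => hij ((Equiv.swap _ _).injective h)
    · subst hj; decide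
  · exact adjoin_shear i j hij hj β hβ

lemma subst_inv (β : R4) (hβ : β ∈ Algebra.adjoin (ZMod 2) {b4, b6, b7, b8})
    (hκ : kappaEnd β = β) (M : Matrix (Fin 4) (Fin 4) (ZMod 2)) (hM : M.det ≠ 0) :
    subst M β = β := by
  have h2 : ∀ t : ZMod 2, t = 0 ∨ t = 1 := by decide
  apply Matrix.diagonal_transvection_induction_of_det_ne_zero (fun M => subst M β = β) M hM
  · intro D hD
    have : D = 1 := by
      funext i
      rw [Matrix.det_diagonal, Finset.prod_ne_zero_iff] at hD
      exact (h2 (D i)).resolve_left (hD i (Finset.mem_univ _))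
    subst this
    have h1 : Matrix.diagonal (1 : Fin 4 → ZMod 2) = 1 := Matrix.diagonal_one
    rw [h1, subst_one]; rfl
  · rintro ⟨i, j, hij, c⟩
    change subst (Matrix.transvection i j c) β = β
    rcases h2 c with rfl | rfl
    · rw [Matrix.transvection_zero, subst_one]; rfl
    · rw [← shear_eq_subst hij]
      exact shear_inv β hβ hκ i j hij
  · intro A B _ _ hA hB
    rw [subst_mul, AlgHom.comp_apply, hA, hB]

/-! ### The Dickson polynomial is linearized -/

/-- The span of the monomials `T ^ (2 ^ i)`. -/
def linz (R : Type*) [CommRing R] : Submodule R (Polynomial R) :=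
  Submodule.span R (Set.range fun i : ℕ => (Polynomial.X : Polynomial R) ^ (2 ^ i))

lemma linz_sq {R : Type*} [CommRing R] [CharP R 2] (p : Polynomial R) (hp : p ∈ linz R) :
    p * p ∈ linz R := by
  unfold linz at *
  induction hp using Submodule.span_induction with
  | mem x hx =>
    obtain ⟨i, rfl⟩ := hx
    refine Submodule.subset_span ⟨i + 1, ?_⟩
    simp only
    rw [pow_succ, pow_mul, sq]
  | zero => simp
  | add x y _ _ hx hy =>
    rw [CharTwo.add_mul_self]
    exact add_mem hx hy
  | smul a x _ hx =>
    rw [smul_mul_smul_comm]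
    exact Submodule.smul_mem _ _ hx

lemma linz_comp {R : Type*} [CommRing R] [CharP R 2] (p : Polynomial R) (hp : p ∈ linz R) (a : R) :
    ∃ e : R, p.comp (Polynomial.X + Polynomial.C a) = p + Polynomial.C e := by
  unfold linz at *
  have : Fact (Nat.Prime 2) := ⟨Nat.prime_two⟩
  induction hp using Submodule.span_induction with
  | mem x hx =>
    obtain ⟨i, rfl⟩ := hx
    refine ⟨a ^ 2 ^ i, ?_⟩
    simp only [Polynomial.pow_comp, Polynomial.X_comp, map_pow]
    rw [add_pow_char_pow]
  | zero => exact ⟨0, by simp⟩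
  | add x y _ _ hx hy =>
    obtain ⟨e, he⟩ := hx
    obtain ⟨e', he'⟩ := hy
    refine ⟨e + e', ?_⟩
    rw [Polynomial.add_comp, he, he', map_add]
    ring
  | smul c x _ hx =>
    obtain ⟨e, he⟩ := hx
    refine ⟨c * e, ?_⟩
    rw [Polynomial.smul_comp, he, smul_add, Polynomial.smul_C, smul_eq_mul]

lemma linz_coeff {R : Type*} [CommRing R] (p : Polynomial R) (hp : p ∈ linz R) (k : ℕ)
    (hk : ∀ i, k ≠ 2 ^ i) : p.coeff k = 0 := by
  unfold linz at *
  induction hp using Submodule.span_induction with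
  | mem x hx =>
    obtain ⟨i, rfl⟩ := hx
    simp [Polynomial.coeff_X_pow, hk i]
  | zero => simp
  | add x y _ _ hx hy => simp [hx, hy]
  | smul c x _ hx => simp [hx]

lemma linz_prod {R ι : Type*} [CommRing R] [CharP R 2] [DecidableEq ι] (v : ι → R) (S : Finset ι) :
    ∏ t ∈ S.powerset, (Polynomial.X + Polynomial.C (∑ j ∈ t, v j)) ∈ linz R := by
  induction S using Finset.induction_on with
  | empty =>
    simp only [Finset.powerset_empty, Finset.prod_singleton, Finset.sum_empty, map_zero, add_zero]
    exact Submodule.subset_span ⟨0, by simp⟩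
  | insert a S ha ih =>
    rw [Finset.prod_powerset_insert ha]
    set p := ∏ t ∈ S.powerset, (Polynomial.X + Polynomial.C (∑ j ∈ t, v j)) with hp
    have h2 : ∏ t ∈ S.powerset, (Polynomial.X + Polynomial.C (∑ j ∈ insert a t, v j)) =
        p.comp (Polynomial.X + Polynomial.C (v a)) := by
      rw [hp, Polynomial.prod_comp]
      refine Finset.prod_congr rfl fun t ht => ?_
      rw [Finset.sum_insert (fun h => ha (Finset.mem_powerset.1 ht h))]
      simp [add_assoc]
    rw [h2]
    obtain ⟨e, he⟩ := linz_comp p ih (v a)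
    rw [he, mul_add, mul_comm p (Polynomial.C e), ← Polynomial.smul_eq_C_mul]
    exact add_mem (linz_sq p ih) (Submodule.smul_mem _ _ ih)

/-- All four variables. -/
def v4 : Fin 4 → R4 := ![xP, yP, zP, wP]

lemma v4_eq (i : Fin 4) : v4 i = X i := by
  fin_cases i <;> rfl

lemma sum_v4_injective : Function.Injective (fun s : Finset (Fin 4) => ∑ j ∈ s, v4 j) := by
  intro s t h
  have key : ∀ (s : Finset (Fin 4)) (i : Fin 4),
      MvPolynomial.coeff (Finsupp.single i 1) (∑ j ∈ s, v4 j) = if i ∈ s then 1 else 0 := by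
    intro s i
    simp only [v4_eq, MvPolynomial.coeff_sum, MvPolynomial.coeff_X]
    simp [Finsupp.single_left_inj]
  ext i
  have h1 := key s i
  have h2 := key t i
  simp only at h
  rw [h, h2] at h1
  by_cases hs : i ∈ s <;> by_cases ht : i ∈ t <;> simp_all

/-- The Dickson polynomial. -/
def dpoly : Polynomial R4 := ∏ α ∈ spanF2 v4, (Polynomial.X + Polynomial.C α)

lemma spanF2_v4 : spanF2 v4 = Finset.univ.map ⟨_, sum_v4_injective⟩ := by
  ext a
  simp [spanF2]

lemma card_span : (spanF2 v4).card = 16 := by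
  rw [spanF2_v4, Finset.card_map]
  simp

lemma dpoly_mem : dpoly ∈ linz R4 := by
  classical
  have := linz_prod v4 Finset.univ
  rw [Finset.powerset_univ] at this
  convert this using 1
  unfold dpoly
  rw [spanF2_v4, Finset.prod_map]
  rfl

lemma dpoly_monic : dpoly.Monic :=
  Polynomial.monic_prod_of_monic _ _ fun _ _ => Polynomial.monic_X_add_C _

lemma dpoly_natDegree : dpoly.natDegree = 16 := by
  unfold dpoly
  rw [Polynomial.natDegree_prod_of_monic _ _ fun _ _ => Polynomial.monic_X_add_C _]
  simp [card_span]

/-- The Dickson algebra. -/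
def dalg : Subalgebra (ZMod 2) R4 := Algebra.adjoin (ZMod 2) (Set.range ![a8, a12, a14, a15])

lemma range_as : Set.range ![a8, a12, a14, a15] = {a8, a12, a14, a15} := by
  ext p
  simp
  tauto

lemma dpoly_coeff (k : ℕ) : dpoly.coeff k ∈ dalg := by
  by_cases hk : k ≤ 16
  · have h : dpoly.coeff k = (spanF2 v4).val.esymm (16 - k) := by
      have := Multiset.prod_X_add_C_coeff (spanF2 v4).val (k := k) (by simpa [card_span] using hk)
      have hc : Multiset.card (spanF2 v4).val = 16 := card_span
      rw [hc] at this
      exact this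
    have hz := linz_coeff _ dpoly_mem k
    have ha : ∀ i : Fin 4, ![a8, a12, a14, a15] i ∈ dalg := fun i =>
      Algebra.subset_adjoin ⟨i, rfl⟩
    by_cases hp : ∃ i, k = 2 ^ i
    · obtain ⟨i, rfl⟩ := hp
      have hi : i ≤ 4 := by
        by_contra! hi
        have := Nat.pow_le_pow_right (n := 2) (by norm_num) hi
        omega
      rw [h]
      interval_cases i
      · exact ha 3
      · exact ha 2
      · exact ha 1
      · exact ha 0
      · simp [Multiset.esymm, one_mem]
    · push Not at hp
      rw [hz hp]
      exact zero_mem _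
  · rw [Polynomial.coeff_eq_zero_of_natDegree_lt (by rw [dpoly_natDegree]; omega)]
    exact zero_mem _

lemma dpoly_eval (a : R4) : dpoly.eval a = 0 ↔ a ∈ spanF2 v4 := by
  unfold dpoly
  rw [Polynomial.eval_prod, Finset.prod_eq_zero_iff]
  constructor
  · rintro ⟨b, hb, h⟩
    simp only [Polynomial.eval_add, Polynomial.eval_X, Polynomial.eval_C] at h
    rw [CharTwo.add_eq_zero] at h
    rwa [h]
  · intro h
    exact ⟨a, h, by simp [CharTwo.add_self_eq_zero]⟩

lemma exists_lift : ∃ f : Polynomial dalg, f.map (algebraMap dalg R4) = dpoly ∧ f.Monic := by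
  have h : dpoly ∈ Polynomial.lifts (algebraMap dalg R4) := by
    rw [Polynomial.lifts_iff_coeff_lifts]
    intro n
    exact ⟨⟨_, dpoly_coeff n⟩, rfl⟩
  obtain ⟨f, h1, -, h2⟩ := Polynomial.lifts_and_natDegree_eq_and_monic h dpoly_monic
  exact ⟨f, h1, h2⟩

lemma X_mem_span (i : Fin 4) : (X i : R4) ∈ spanF2 v4 := by
  rw [mem_spanF2, ← v4_eq]
  exact Submodule.subset_span ⟨i, rfl⟩

instance dalg_integral : Algebra.IsIntegral dalg R4 := by
  refine ⟨fun p => ?_⟩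
  induction p using MvPolynomial.induction_on with
  | C a => exact isIntegral_algebraMap (R := dalg) (x := algebraMap (ZMod 2) dalg a)
  | add p q hp hq => exact hp.add hq
  | mul_X p i hp =>
    refine hp.mul ?_
    obtain ⟨f, h1, h2⟩ := exists_lift
    refine ⟨f, h2, ?_⟩
    rw [← Polynomial.eval_map, h1, dpoly_eval]
    exact X_mem_span i

instance dalg_closed : IsIntegrallyClosed dalg := by
  have hb : IsTranscendenceBasis (ZMod 2) ![a8, a12, a14, a15] := by
    have : Algebra.IsAlgebraic (Algebra.adjoin (ZMod 2) (Set.range ![a8, a12, a14, a15])) R4 :=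
      (inferInstance : Algebra.IsAlgebraic dalg R4)
    apply Algebra.IsAlgebraic.isTranscendenceBasis_of_le_trdeg_of_finite
    rw [MvPolynomial.trdeg_of_isDomain]
    simp
  exact IsIntegrallyClosed.of_equiv hb.1.aevalEquiv.toRingEquiv

/-! ### Galois theory -/

lemma equiv_eq_subst (σ : R4 ≃ₐ[dalg] R4) :
    ∃ M : Matrix (Fin 4) (Fin 4) (ZMod 2), M.det ≠ 0 ∧ ∀ p, σ p = subst M p := by
  obtain ⟨f, h1, -⟩ := exists_lift
  have hroot : ∀ i, ∃ c : Fin 4 → ZMod 2, ∑ j, c j • v4 j = σ (X i) := by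
    intro i
    rw [← Submodule.mem_span_range_iff_exists_fun (ZMod 2), ← mem_spanF2, ← dpoly_eval, ← h1,
      Polynomial.eval_map_algebraMap]
    have h2 : Polynomial.aeval (X i : R4) f = 0 := by
      rw [← Polynomial.eval_map_algebraMap, h1, dpoly_eval]
      exact X_mem_span i
    have h5 := Polynomial.aeval_algHom_apply (σ : R4 →ₐ[dalg] R4) (X i) f
    rw [h2, map_zero] at h5
    exact h5
  choose M' hM using hroot
  obtain ⟨M, rfl⟩ : ∃ M : Matrix (Fin 4) (Fin 4) (ZMod 2), M' = fun i j => M i j :=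
    ⟨Matrix.of M', rfl⟩
  have hσ : ∀ p, σ p = subst M p := by
    intro p
    have : ((σ : R4 →ₐ[dalg] R4).restrictScalars (ZMod 2)) = subst M := by
      apply MvPolynomial.algHom_ext
      intro i
      rw [subst_X]
      refine (hM i).symm.trans ?_
      simp [v4_eq, MvPolynomial.smul_eq_C_mul]
    exact DFunLike.congr_fun this p
  refine ⟨M, fun hdet => ?_, hσ⟩
  obtain ⟨c, hc, hcM⟩ := Matrix.exists_vecMul_eq_zero_iff.2 hdet
  have h0 : subst M (∑ i, C (c i) * X i) = 0 := by
    rw [map_sum]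
    simp only [map_mul, subst_X, algHom_C, algebraMap_eq, Finset.mul_sum]
    rw [Finset.sum_comm]
    refine Finset.sum_eq_zero fun j _ => ?_
    have := congrFun hcM j
    simp only [Matrix.vecMul, dotProduct, Pi.zero_apply] at this
    simp_rw [← mul_assoc, ← C_mul]
    rw [← Finset.sum_mul, ← map_sum, this]
    simp
  rw [← hσ] at h0
  have h3 : ∑ i, C (c i) * X i = (0 : R4) := σ.injective (h0.trans (map_zero σ).symm)
  apply hc
  funext i
  have h4 := congrArg (MvPolynomial.coeff (Finsupp.single i 1)) h3
  simpa [MvPolynomial.coeff_sum, MvPolynomial.coeff_C_mul, MvPolynomial.coeff_X,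
    Finsupp.single_left_inj] using h4

lemma galois_frac (K L : Type*) [Field K] [Field L] [Algebra dalg K] [IsFractionRing dalg K]
    [Algebra R4 L] [IsFractionRing R4 L] [Algebra K L] [IsScalarTower dalg K L] :
    FiniteDimensional K L ∧ IsGalois K L := by
  obtain ⟨f, h1, hm⟩ := exists_lift
  let p : Polynomial K := f.map (algebraMap dalg K)
  have hp : p.map (algebraMap K L) = ∏ α ∈ spanF2 v4, (Polynomial.X - Polynomial.C (algebraMap R4 L α)) := by
    have : p.map (algebraMap K L) = dpoly.map (algebraMap R4 L) := by
      rw [← h1, Polynomial.map_map, Polynomial.map_map, ← IsScalarTower.algebraMap_eq,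
        ← IsScalarTower.algebraMap_eq]
    rw [this, dpoly, Polynomial.map_prod]
    refine Finset.prod_congr rfl fun α _ => ?_
    simp only [Polynomial.map_add, Polynomial.map_X, Polynomial.map_C]
    rw [sub_eq_add_neg, ← map_neg Polynomial.C, ← map_neg (algebraMap R4 L), CharTwo.neg_eq]
  have hsep : p.Separable := by
    rw [← Polynomial.separable_map (algebraMap K L), hp, Polynomial.separable_prod_X_sub_C_iff']
    intro x _ y _ h
    exact IsFractionRing.injective R4 L h
  have hp0 : p ≠ 0 := (hm.map _).ne_zero
  have hspl : p.IsSplittingField K L := by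
    rw [isSplittingField_iff_intermediateField]
    constructor
    · rw [hp]
      exact Polynomial.Splits.prod fun α _ => Polynomial.Splits.X_sub_C _
    · rw [eq_top_iff]
      rintro x -
      have hX : ∀ q : R4, algebraMap R4 L q ∈ IntermediateField.adjoin K (p.rootSet L) := by
        intro q
        induction q using MvPolynomial.induction_on with
        | C a =>
          have : algebraMap R4 L (C a) =
              algebraMap K L (algebraMap dalg K (algebraMap (ZMod 2) dalg a)) := by
            rw [← IsScalarTower.algebraMap_apply, IsScalarTower.algebraMap_apply dalg R4 L]
            rfl
          rw [this]
          exact IntermediateField.algebraMap_mem _ _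
        | add a b ha hb => rw [map_add]; exact add_mem ha hb
        | mul_X a i ha =>
          rw [map_mul]
          refine mul_mem ha (IntermediateField.subset_adjoin _ _ ?_)
          rw [Polynomial.mem_rootSet]
          refine ⟨hp0, ?_⟩
          rw [← Polynomial.eval_map_algebraMap, hp, Polynomial.eval_prod]
          exact Finset.prod_eq_zero (X_mem_span i) (by simp)
      obtain ⟨a, b, -, rfl⟩ := IsFractionRing.div_surjective (A := R4) x
      exact div_mem (hX a) (hX b)
  exact ⟨Polynomial.IsSplittingField.finiteDimensional L p, IsGalois.of_separable_splitting_field hsep⟩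

lemma inv_frac (K L : Type*) [Field K] [Field L] [Algebra dalg K] [IsFractionRing dalg K]
    [Algebra R4 L] [IsFractionRing R4 L] [Algebra K L] [IsScalarTower dalg K L] (β : R4)
    (h : ∀ σ : R4 ≃ₐ[dalg] R4, σ β = β) : β ∈ dalg := by
  obtain ⟨h1, h2⟩ := galois_frac K L
  have h3 : IsIntegralClosure R4 dalg L := IsIntegralClosure.of_isIntegrallyClosed _ _ _
  have h4 := Algebra.isInvariant_of_isGalois' dalg K L R4
  obtain ⟨a, ha⟩ := h4.isInvariant β h
  rw [← ha]
  exact a.2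

lemma inv_dalg (β : R4) (h : ∀ σ : R4 ≃ₐ[dalg] R4, σ β = β) : β ∈ dalg := by
  let _ : Algebra (FractionRing dalg) (FractionRing R4) := FractionRing.liftAlgebra dalg _
  exact inv_frac (FractionRing dalg) (FractionRing R4) β h

theorem stmt_12 (β : R4) (hβ : β ∈ Algebra.adjoin (ZMod 2) {b4, b6, b7, b8})
    (hκ : kappaEnd β = β) :
    β ∈ Algebra.adjoin (ZMod 2) {a8, a12, a14, a15} := by
  rw [← range_as]
  refine inv_dalg β fun σ => ?_
  obtain ⟨M, hM, hσ⟩ := equiv_eq_subst σ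
  exact (hσ β).trans (subst_inv β hβ hκ M hM)
end
end
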